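/- arXiv:2010.00478 — 2 statements merged into one kernel-verified Lean document; each statement's English description precedes it below -/
import Mathlib

section
/- Let d be a positive integer and let μ₁, …, μ_d be finite measures on ℝ^d, each absolutely continuous with respect to the Lebesgue measure. Then there exist a nonzero vector v ∈ ℝ^d and a real number α such that for every i = 1, …, d, μ_i({x : ⟨x, v⟩ ≤ α}) = μ_i({x : ⟨x, v⟩ ≥ α}); that is, the hyperplane {x : ⟨x, v⟩ = α} splits each measure into two halves. -/
open MeasureTheory
open scoped RealInnerProductSpace

/-!
A half-space `{x | ⟪x, v⟫ ≤ α}` is parametrised by `w = (v, α)`, the opposite one by `-w`, so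
the differences of the measures of the two form an odd continuous map from the nonzero vectors of a
space of dimension `n + 1` to `ℝ ^ n`. By the Borsuk–Ulam theorem it has a zero.

Borsuk–Ulam is proved algebraically. By Stone–Weierstrass it reduces to polynomials, and then to
`n` forms of one odd degree `d` in `n + 1` variables, which must have a common real zero on the unit
sphere. Consider a square system `X i ^ d + t * h i` in which every `h i` has degree at most `d`.
Replacing `X i ^ d` by `X i ^ d + t * h i` in monomials is a linear map whose finite blocks have
determinants polynomial in `t` and equal to `1` at `t = 0`; hence it is bijective for all but
countably many `t`, and the system has a quotient algebra of the same dimension as for `t = 0`,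
namely the odd number `d ^ card σ`. A real algebra of odd dimension has a real point, since
otherwise all its simple modules are isomorphic to `ℂ`. Letting `t` tend to infinity and
normalising the solutions, one obtains the common zero of the forms.
-/

open Module MvPolynomial

/-! ### Perturbing a system of pure powers -/

section PowSubst

variable {σ R S K : Type*} [CommRing R] [CommRing S] [Field K]

/-- The `i`-th equation of the system `X i ^ d + t * h i`, `i : σ`, regarded as a perturbation of
`X i ^ d` with parameter `t`. -/
noncomputable def perturbedPow (d : ℕ) (h : σ → MvPolynomial σ R) (t : R) (i : σ) :
    MvPolynomial σ R :=
  X i ^ d + C t * h i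

lemma totalDegree_perturbedPow_le [Nontrivial R] {d : ℕ} {h : σ → MvPolynomial σ R}
    (hh : ∀ i, (h i).totalDegree ≤ d) (t : R) (i : σ) :
    (perturbedPow d h t i).totalDegree ≤ d := by
  refine (totalDegree_add _ _).trans (max_le (totalDegree_X_pow _ _).le ?_)
  rw [C_mul']
  exact (totalDegree_smul_le _ _).trans (hh i)

variable [Fintype σ]

/-- The `R`-linear map that replaces `X i ^ d` by `g i` for every `i`: writing exponents as
`a + d * b` with `a i < d`, it sends the monomial `X ^ (a + d * b)` to `X ^ a * g ^ b`. It compares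
the ideal generated by the `X i ^ d` with the one generated by the `g i`. For `d = 0` it is the
identity, since then `a % d = a` and `a / d = 0`. -/
noncomputable def powSubst (d : ℕ) (g : σ → MvPolynomial σ R) :
    MvPolynomial σ R →ₗ[R] MvPolynomial σ R :=
  (basisMonomials σ R).constr R fun a ↦
    monomial (a.mapRange (· % d) (Nat.zero_mod d)) 1 * ∏ i, g i ^ (a i / d)

lemma powSubst_monomial (d : ℕ) (g : σ → MvPolynomial σ R) (a : σ →₀ ℕ) :
    powSubst d g (monomial a 1) =
      monomial (a.mapRange (· % d) (Nat.zero_mod d)) 1 * ∏ i, g i ^ (a i / d) :=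
  (basisMonomials σ R).constr_basis R _ a

lemma powSubst_X_pow_mul {d : ℕ} (hd : 0 < d) (g : σ → MvPolynomial σ R) (i : σ)
    (p : MvPolynomial σ R) : powSubst d g (X i ^ d * p) = g i * powSubst d g p := by
  classical
  suffices h : powSubst d g ∘ₗ LinearMap.mulLeft R (X i ^ d) =
      LinearMap.mulLeft R (g i) ∘ₗ powSubst d g from LinearMap.congr_fun h p
  refine (basisMonomials σ R).ext fun a ↦ ?_
  have hmod : (Finsupp.single i d + a).mapRange (· % d) (Nat.zero_mod d) =
      a.mapRange (· % d) (Nat.zero_mod d) := by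
    ext j
    obtain rfl | hij := eq_or_ne i j <;> simp [*]
  have hdiv (j : σ) : (Finsupp.single i d + a) j / d =
      (Pi.single i 1 : σ → ℕ) j + a j / d := by
    obtain rfl | hij := eq_or_ne i j
    · simp [Nat.add_div_left _ hd, add_comm]
    · simp [hij.symm]
  have hprod : ∏ j, g j ^ (Pi.single i 1 : σ → ℕ) j = g i := by
    rw [Fintype.prod_eq_single i fun j hj ↦ by simp [hj]]
    simp
  simp only [coe_basisMonomials, LinearMap.comp_apply, LinearMap.mulLeft_apply, X_pow_eq_monomial,
    monomial_mul, one_mul, powSubst_monomial, hmod, hdiv, pow_add, Finset.prod_mul_distrib, hprod]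
  ring

lemma powSubst_X_pow (d : ℕ) :
    powSubst d (fun i : σ ↦ (X i ^ d : MvPolynomial σ R)) = LinearMap.id := by
  refine (basisMonomials σ R).ext fun a ↦ ?_
  rw [coe_basisMonomials, powSubst_monomial, LinearMap.id_apply]
  simp only [monomial_eq, C_1, one_mul, ← pow_mul, Finsupp.prod_fintype _ _ fun _ ↦ pow_zero _,
    Finsupp.mapRange_apply, ← Finset.prod_mul_distrib, ← pow_add, Nat.mod_add_div]

lemma map_powSubst_monomial (f : R →+* S) (d : ℕ) (g : σ → MvPolynomial σ R) (a : σ →₀ ℕ) :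
    map f (powSubst d g (monomial a 1)) = powSubst d (fun i ↦ map f (g i)) (monomial a 1) := by
  simp only [powSubst_monomial, map_mul, map_prod, map_pow, map_monomial, map_one]

lemma totalDegree_powSubst_monomial_le {d : ℕ} {g : σ → MvPolynomial σ R}
    (hg : ∀ i, (g i).totalDegree ≤ d) (a : σ →₀ ℕ) :
    (powSubst d g (monomial a 1)).totalDegree ≤ a.degree := by
  have hmod : (monomial (a.mapRange (· % d) (Nat.zero_mod d)) (1 : R)).totalDegree ≤
      ∑ i, a i % d := by
    refine (totalDegree_monomial_le _ _).trans_eq ?_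
    rw [Finsupp.sum_fintype _ _ fun _ ↦ rfl]
    rfl
  have hdiv : (∏ i, g i ^ (a i / d)).totalDegree ≤ ∑ i, a i / d * d :=
    (totalDegree_finsetProd _ _).trans <| Finset.sum_le_sum fun i _ ↦
      (totalDegree_pow _ _).trans <| Nat.mul_le_mul_left _ (hg i)
  calc (powSubst d g (monomial a 1)).totalDegree
      ≤ ∑ i, a i % d + ∑ i, a i / d * d := by
        rw [powSubst_monomial]
        exact (totalDegree_mul _ _).trans (add_le_add hmod hdiv)
    _ = a.degree := by
        simp only [← Finset.sum_add_distrib, Nat.mod_add_div', Finsupp.degree_eq_sum]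

lemma powSubst_mem_restrictTotalDegree {d : ℕ} {g : σ → MvPolynomial σ R}
    (hg : ∀ i, (g i).totalDegree ≤ d) {m : ℕ} {p : MvPolynomial σ R}
    (hp : p ∈ restrictTotalDegree σ R m) : powSubst d g p ∈ restrictTotalDegree σ R m := by
  rw [restrictTotalDegree, restrictSupport_eq_span] at hp
  refine Submodule.span_le (p := (restrictTotalDegree σ R m).comap (powSubst d g)).mpr ?_ hp
  rintro _ ⟨a, ha, rfl⟩
  exact (mem_restrictTotalDegree _ _ _).mpr ((totalDegree_powSubst_monomial_le hg a).trans ha)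

lemma powSubst_surjective_of_injective {d : ℕ} {g : σ → MvPolynomial σ K}
    (hg : ∀ i, (g i).totalDegree ≤ d) (hinj : Function.Injective (powSubst d g)) :
    Function.Surjective (powSubst d g) := by
  intro p
  let T : Module.End K (restrictTotalDegree σ K p.totalDegree) :=
    (powSubst d g).restrict fun _ ↦ powSubst_mem_restrictTotalDegree hg
  have hT : Function.Surjective T := LinearMap.injective_iff_surjective.mp fun q r hqr ↦
    Subtype.ext (hinj (congrArg Subtype.val hqr))
  obtain ⟨q, hq⟩ := hT ⟨p, (mem_restrictTotalDegree _ _ _).mpr le_rfl⟩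
  exact ⟨q, congrArg Subtype.val hq⟩

/-- The block with rows and columns in `s` of the matrix of `powSubst d g` in the basis of
monomials. -/
noncomputable def powSubstMatrix (d : ℕ) (g : σ → MvPolynomial σ R) (s : Finset (σ →₀ ℕ)) :
    Matrix s s R :=
  .of fun a b ↦ coeff a.1 (powSubst d g (monomial b.1 1))

lemma powSubst_injective_of_det_ne_zero [IsDomain R] {d : ℕ} {g : σ → MvPolynomial σ R}
    (hdet : ∀ s, (powSubstMatrix d g s).det ≠ 0) : Function.Injective (powSubst d g) := by
  refine (injective_iff_map_eq_zero _).mpr fun p hp ↦ ?_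
  have hmul : (powSubstMatrix d g p.support).mulVec (fun b ↦ coeff b.1 p) = 0 := by
    ext a
    calc (powSubstMatrix d g p.support).mulVec (fun b ↦ coeff b.1 p) a
        = ∑ b ∈ p.support, coeff a.1 (powSubst d g (monomial b (coeff b p))) := by
          rw [← Finset.sum_coe_sort]
          refine Finset.sum_congr rfl fun b _ ↦ ?_
          have hb : monomial b.1 (coeff b.1 p) = coeff b.1 p • monomial b.1 1 := by
            rw [smul_monomial, smul_eq_mul, mul_one]
          rw [hb, map_smul, coeff_smul, smul_eq_mul, mul_comm]
          rfl
      _ = 0 := by rw [← coeff_sum, ← map_sum, ← as_sum, hp, coeff_zero]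
  have hcoeff := Matrix.eq_zero_of_mulVec_eq_zero (hdet p.support) hmul
  ext a
  by_contra ha
  exact ha (congrFun hcoeff ⟨a, mem_support_iff.mpr ha⟩)

lemma map_powSubstMatrix_perturbedPow (d : ℕ) (h : σ → MvPolynomial σ R) (s : Finset (σ →₀ ℕ))
    (t : R) :
    (powSubstMatrix d (perturbedPow d (fun i ↦ map Polynomial.C (h i)) Polynomial.X) s).map
      (Polynomial.evalRingHom t) = powSubstMatrix d (perturbedPow d h t) s := by
  have hmap (i : σ) : map (Polynomial.evalRingHom t)
      (perturbedPow d (fun i ↦ map Polynomial.C (h i)) Polynomial.X i) = perturbedPow d h t i := by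
    have hid : (Polynomial.evalRingHom t).comp Polynomial.C = RingHom.id R := by ext; simp
    simp [perturbedPow, map_map, hid, map_id]
  ext a b
  simp only [powSubstMatrix, Matrix.map_apply, Matrix.of_apply, ← coeff_map,
    map_powSubst_monomial, hmap]

lemma powSubstMatrix_perturbedPow_zero (d : ℕ) (h : σ → MvPolynomial σ R)
    (s : Finset (σ →₀ ℕ)) : powSubstMatrix d (perturbedPow d h 0) s = 1 := by
  have hpow : perturbedPow d h 0 = fun i ↦ X i ^ d := by ext1 i; simp [perturbedPow]
  ext a b
  classical
  simp [powSubstMatrix, hpow, powSubst_X_pow, coeff_monomial, Matrix.one_apply, eq_comm]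

lemma finite_setOfPred_det_powSubstMatrix_eq_zero [IsDomain R] (d : ℕ) (h : σ → MvPolynomial σ R)
    (s : Finset (σ →₀ ℕ)) :
    {t | (powSubstMatrix d (perturbedPow d h t) s).det = 0}.Finite := by
  let Δ : Polynomial R :=
    (powSubstMatrix d (perturbedPow d (fun i ↦ map Polynomial.C (h i)) Polynomial.X) s).det
  have heval (t : R) : Δ.eval t = (powSubstMatrix d (perturbedPow d h t) s).det := by
    rw [← map_powSubstMatrix_perturbedPow, ← RingHom.mapMatrix_apply, ← RingHom.map_det]
    rfl
  have hΔ : Δ ≠ 0 := by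
    intro hzero
    have := heval 0
    rw [powSubstMatrix_perturbedPow_zero, hzero] at this
    simp at this
  simpa only [heval, Polynomial.IsRoot.def] using Polynomial.finite_setOfPred_isRoot hΔ

lemma countable_setOfPred_not_bijective_powSubst {d : ℕ} {h : σ → MvPolynomial σ K}
    (hh : ∀ i, (h i).totalDegree ≤ d) :
    {t | ¬ Function.Bijective (powSubst d (perturbedPow d h t))}.Countable := by
  refine (Set.countable_iUnion fun s ↦
    (finite_setOfPred_det_powSubstMatrix_eq_zero d h s).countable).mono fun t ht ↦ ?_
  contrapose! ht
  have hinj : Function.Injective (powSubst d (perturbedPow d h t)) :=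
    powSubst_injective_of_det_ne_zero fun s hs ↦ ht (Set.mem_iUnion.mpr ⟨s, hs⟩)
  exact not_not.mpr
    ⟨hinj, powSubst_surjective_of_injective (totalDegree_perturbedPow_le hh t) hinj⟩

lemma map_powSubst_span_X_pow {d : ℕ} (hd : 0 < d) {g : σ → MvPolynomial σ R}
    (hsurj : Function.Surjective (powSubst d g)) :
    ((Ideal.span (Set.range fun i : σ ↦ (X i ^ d : MvPolynomial σ R))).restrictScalars R).map
      (powSubst d g) = (Ideal.span (Set.range g)).restrictScalars R := by
  have hsum (c : σ → MvPolynomial σ R) :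
      powSubst d g (∑ i, c i * X i ^ d) = ∑ i, powSubst d g (c i) * g i := by
    simp only [map_sum, mul_comm _ (X _ ^ d), powSubst_X_pow_mul hd, mul_comm (g _)]
  ext p
  simp only [Submodule.mem_map, Submodule.restrictScalars_mem, Ideal.mem_span_range_iff_exists_fun]
  constructor
  · rintro ⟨_, ⟨c, rfl⟩, rfl⟩
    exact ⟨_, (hsum c).symm⟩
  · rintro ⟨c, rfl⟩
    choose q hq using fun i ↦ hsurj (c i)
    exact ⟨_, ⟨q, rfl⟩, by simp only [hsum, hq]⟩

end PowSubst


section QuotientByPowers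

variable {σ R : Type*} [CommRing R]

lemma isCompl_restrictSupport_compl (s : Set (σ →₀ ℕ)) :
    IsCompl (restrictSupport R s) (restrictSupport R sᶜ) := by
  have hindep := (basisMonomials σ R).linearIndependent
  have hspan := (basisMonomials σ R).span_eq
  rw [coe_basisMonomials] at hindep hspan
  simp only [restrictSupport_eq_span]
  refine ⟨hindep.disjoint_span_image disjoint_compl_right, codisjoint_iff.mpr ?_⟩
  rw [← Submodule.span_union, ← Set.image_union, Set.union_compl_self, Set.image_univ, hspan]

lemma restrictScalars_span_X_pow (d : ℕ) :
    (Ideal.span (Set.range fun i : σ ↦ (X i ^ d : MvPolynomial σ R))).restrictScalars R =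
      restrictSupport R {a | ∃ i, d ≤ a i} := by
  have hrange : (Set.range fun i : σ ↦ (X i ^ d : MvPolynomial σ R)) =
      (monomial · 1) '' Set.range fun i : σ ↦ Finsupp.single i d := by
    rw [← Set.range_comp]
    exact congrArg Set.range (funext fun i ↦ X_pow_eq_monomial)
  ext p
  rw [Submodule.restrictScalars_mem, hrange, mem_ideal_span_monomial_image,
    mem_restrictSupport_iff]
  simp [Set.subset_def]

lemma card_setOfPred_forall_lt [Fintype σ] (d : ℕ) :
    Nat.card {a : σ →₀ ℕ | ∀ i, a i < d} = d ^ Fintype.card σ := by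
  let e : {a : σ →₀ ℕ | ∀ i, a i < d} ≃ (σ → Fin d) :=
    (Finsupp.equivFunOnFinite.subtypeEquiv fun _ ↦ Iff.rfl).trans
      ((Equiv.subtypePiEquivPi (p := fun _ n ↦ n < d)).trans
        (Equiv.piCongrRight fun _ ↦ Fin.equivSubtype.symm))
  rw [Nat.card_congr e, Nat.card_fun, Nat.card_fin, Nat.card_eq_fintype_card]

lemma finrank_quotient_span_X_pow [Fintype σ] [Nontrivial R] (d : ℕ) :
    finrank R (MvPolynomial σ R ⧸
      (Ideal.span (Set.range fun i : σ ↦ (X i ^ d : MvPolynomial σ R))).restrictScalars R) =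
      d ^ Fintype.card σ := by
  have hcompl : {a : σ →₀ ℕ | ∃ i, d ≤ a i}ᶜ = {a | ∀ i, a i < d} := by ext a; simp
  rw [restrictScalars_span_X_pow,
    (Submodule.quotientEquivOfIsCompl _ _ (isCompl_restrictSupport_compl _)).finrank_eq,
    finrank_eq_nat_card_basis (basisRestrictSupport R _), hcompl, card_setOfPred_forall_lt]

end QuotientByPowers

lemma nonempty_algHom_real_or_finrank_eq_two (A M : Type*) [CommRing A] [Algebra ℝ A]
    [AddCommGroup M] [Module ℝ M] [Module A M] [IsScalarTower ℝ A M] [Module.Finite ℝ M]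
    [IsSimpleModule A M] : Nonempty (A →ₐ[ℝ] ℝ) ∨ finrank ℝ M = 2 := by
  obtain ⟨I, hI, ⟨e⟩⟩ := isSimpleModule_iff_quot_maximal.mp ‹IsSimpleModule A M›
  let : Field (A ⧸ I) := Ideal.Quotient.field I
  have : Module.Finite ℝ (A ⧸ I) := Module.Finite.equiv (e.restrictScalars ℝ)
  rcases Real.nonempty_algEquiv_or (A ⧸ I) with ⟨⟨f⟩⟩ | ⟨⟨f⟩⟩
  · exact .inl ⟨(f : A ⧸ I →ₐ[ℝ] ℝ).comp (Ideal.Quotient.mkₐ ℝ I)⟩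
  · refine .inr ?_
    rw [(e.restrictScalars ℝ).finrank_eq, f.toLinearEquiv.finrank_eq,
      Complex.finrank_real_complex]

lemma even_finrank_of_isEmpty_algHom_real {A M : Type*} [CommRing A] [Algebra ℝ A]
    [IsEmpty (A →ₐ[ℝ] ℝ)]
    [AddCommGroup M] [moduleReal : Module ℝ M] [Module A M] [tower : IsScalarTower ℝ A M]
    [finiteReal : Module.Finite ℝ M] : Even (finrank ℝ M) := by
  have hlen : IsFiniteLength A M := isFiniteLength_iff_isNoetherian_isArtinian.mpr
    ⟨isNoetherian_of_tower ℝ inferInstance, isArtinian_of_tower ℝ inferInstance⟩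
  induction hlen generalizing moduleReal tower finiteReal with
  | of_subsingleton => simp [finrank_zero_of_subsingleton]
  | @of_simple_quotient M _ _ N _ _ ih =>
    have : Module.Finite ℝ N :=
      .of_injective (N.subtype.restrictScalars ℝ) N.injective_subtype
    have : Module.Finite ℝ (M ⧸ N) :=
      .of_surjective (N.mkQ.restrictScalars ℝ) N.mkQ_surjective
    have hquot : finrank ℝ (M ⧸ N) = 2 :=
      (nonempty_algHom_real_or_finrank_eq_two A _).resolve_left (not_nonempty_iff.mpr ‹_›)
    have hadd : finrank ℝ (M ⧸ N) + finrank ℝ N = finrank ℝ M :=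
      Submodule.finrank_quotient_add_finrank (N.restrictScalars ℝ)
    rw [← hadd, hquot]
    exact even_two.add ih

lemma finrank_quotient_span_of_bijective_powSubst {σ R : Type*} [Fintype σ] [CommRing R]
    [Nontrivial R] {d : ℕ} (hd : 0 < d) {g : σ → MvPolynomial σ R}
    (hg : Function.Bijective (powSubst d g)) :
    finrank R (MvPolynomial σ R ⧸ Ideal.span (Set.range g)) = d ^ Fintype.card σ := by
  rw [← (Submodule.Quotient.restrictScalarsEquiv R (Ideal.span (Set.range g))).finrank_eq,
    ← finrank_quotient_span_X_pow (σ := σ) (R := R) d]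
  exact (Submodule.Quotient.equiv _ _ (LinearEquiv.ofBijective _ hg)
    (map_powSubst_span_X_pow hd hg.2)).finrank_eq.symm

lemma nonempty_algHom_real_of_odd_finrank {A : Type*} [CommRing A] [Algebra ℝ A]
    (hA : Odd (finrank ℝ A)) : Nonempty (A →ₐ[ℝ] ℝ) := by
  by_contra hempty
  have : IsEmpty (A →ₐ[ℝ] ℝ) := not_nonempty_iff.mp hempty
  have : Module.Finite ℝ A := Module.finite_of_finrank_pos hA.pos
  exact Nat.not_even_iff_odd.mpr hA (even_finrank_of_isEmpty_algHom_real (A := A))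

lemma exists_eval_eq_zero_of_algHom_quotient {σ R : Type*} [CommRing R]
    {I : Ideal (MvPolynomial σ R)} (χ : (MvPolynomial σ R ⧸ I) →ₐ[R] R) :
    ∃ x : σ → R, ∀ p ∈ I, eval x p = 0 := by
  refine ⟨fun i ↦ χ (Ideal.Quotient.mkₐ R I (X i)), fun p hp ↦ ?_⟩
  have haeval := DFunLike.congr_fun (aeval_unique (χ.comp (Ideal.Quotient.mkₐ R I))) p
  rw [← coe_aeval_eq_eval]
  calc aeval (fun i ↦ χ (Ideal.Quotient.mkₐ R I (X i))) p
      = χ (Ideal.Quotient.mk I p) := haeval.symm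
    _ = 0 := by rw [Ideal.Quotient.eq_zero_iff_mem.mpr hp, map_zero]

lemma exists_eval_eq_zero_of_bijective_powSubst {σ : Type*} [Fintype σ] {d : ℕ} (hd : Odd d)
    {g : σ → MvPolynomial σ ℝ} (hg : Function.Bijective (powSubst d g)) :
    ∃ x : σ → ℝ, ∀ i, eval x (g i) = 0 := by
  have hodd : Odd (finrank ℝ (MvPolynomial σ ℝ ⧸ Ideal.span (Set.range g))) := by
    rw [finrank_quotient_span_of_bijective_powSubst hd.pos hg]
    exact hd.pow
  obtain ⟨χ⟩ := nonempty_algHom_real_of_odd_finrank hodd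
  obtain ⟨x, hx⟩ := exists_eval_eq_zero_of_algHom_quotient χ
  exact ⟨x, fun i ↦ hx _ (Ideal.subset_span ⟨i, rfl⟩)⟩

lemma exists_gt_exists_pow_add_mul_eval_eq_zero {σ : Type*} [Finite σ] {d : ℕ} (hd : Odd d)
    {h : σ → MvPolynomial σ ℝ} (hh : ∀ i, (h i).totalDegree ≤ d) (T : ℝ) :
    ∃ t > T, ∃ x : σ → ℝ, ∀ i, x i ^ d + t * eval x (h i) = 0 := by
  cases nonempty_fintype σ
  obtain ⟨t, ht, hTt⟩ :=
    ((countable_setOfPred_not_bijective_powSubst hh).dense_compl ℝ).exists_gt T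
  obtain ⟨x, hx⟩ := exists_eval_eq_zero_of_bijective_powSubst hd (not_not.mp ht)
  exact ⟨t, hTt, x, fun i ↦ by simpa [perturbedPow] using hx i⟩

/-! ### The Borsuk–Ulam theorem -/

lemma exists_mem_eq_zero_of_forall_exists_norm_le {X E : Type*} [TopologicalSpace X]
    [NormedAddCommGroup E] {K : Set X} (hK : IsCompact K) {f : X → E} (hf : ContinuousOn f K)
    (h : ∀ ε > 0, ∃ x ∈ K, ‖f x‖ ≤ ε) : ∃ x ∈ K, f x = 0 := by
  have hne : K.Nonempty := let ⟨x, hx, _⟩ := h 1 one_pos; ⟨x, hx⟩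
  obtain ⟨x, hx, hmin⟩ := hK.exists_isMinOn hne hf.norm
  refine ⟨x, hx, norm_le_zero_iff.mp <| le_of_forall_pos_le_add fun ε hε ↦ ?_⟩
  obtain ⟨y, hy, hyε⟩ := h ε hε
  rw [zero_add]
  exact (hmin hy).trans hyε

lemma sq_le_sum_sq {ι : Type*} [Fintype ι] (y : ι → ℝ) (i : ι) : y i ^ 2 ≤ ∑ j, y j ^ 2 :=
  Finset.single_le_sum (f := fun j ↦ y j ^ 2) (fun _ _ ↦ sq_nonneg _) (Finset.mem_univ i)

lemma abs_le_one_of_sum_sq_eq_one {ι : Type*} [Fintype ι] {y : ι → ℝ} (hy : ∑ i, y i ^ 2 = 1)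
    (i : ι) : |y i| ≤ 1 :=
  (sq_le_one_iff_abs_le_one _).mp ((sq_le_sum_sq y i).trans_eq hy)

lemma isCompact_setOfPred_sum_sq_eq_one (ι : Type*) [Fintype ι] :
    IsCompact {y : ι → ℝ | ∑ i, y i ^ 2 = 1} := by
  refine Metric.isCompact_of_isClosed_isBounded (isClosed_eq (by fun_prop) (by fun_prop)) ?_
  refine (Metric.isBounded_closedBall (x := (0 : ι → ℝ)) (r := 1)).subset fun y hy ↦ ?_
  exact mem_closedBall_zero_iff.mpr <|
    (pi_norm_le_iff_of_nonneg zero_le_one).mpr fun i ↦ abs_le_one_of_sum_sq_eq_one hy i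

lemma exists_smul_sum_sq_eq_one {ι : Type*} [Fintype ι] {y : ι → ℝ} (hy : y ≠ 0) :
    ∃ c : ℝ, ∑ i, (c • y) i ^ 2 = 1 := by
  obtain ⟨i, hi⟩ := Function.ne_iff.mp hy
  have hpos : 0 < ∑ j, y j ^ 2 := (sq_pos_of_ne_zero hi).trans_le (sq_le_sum_sq y i)
  refine ⟨(√(∑ j, y j ^ 2))⁻¹, ?_⟩
  simp only [Pi.smul_apply, smul_eq_mul, mul_pow, ← Finset.mul_sum, inv_pow, Real.sq_sqrt hpos.le,
    inv_mul_cancel₀ hpos.ne']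

lemma eval_smul_of_isHomogeneous {σ R : Type*} [CommSemiring R] {d : ℕ} {F : MvPolynomial σ R}
    (hF : F.IsHomogeneous d) (c : R) (y : σ → R) : eval (c • y) F = c ^ d * eval y F := by
  rw [eval_eq, eval_eq, Finset.mul_sum]
  refine Finset.sum_congr rfl fun a ha ↦ ?_
  have hdeg : ∑ i ∈ a.support, a i = d := by
    rw [← hF (mem_support_iff.mp ha)]
    exact DFunLike.congr_fun Finsupp.degree_eq_weight_one a
  simp only [Pi.smul_apply, smul_eq_mul, mul_pow, Finset.prod_mul_distrib,
    Finset.prod_pow_eq_pow_sum, hdeg, mul_left_comm]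

lemma exists_sum_sq_eq_one_abs_eval_le {ι : Type*} [Fintype ι] {d : ℕ} (hd : Odd d)
    {F : ι → MvPolynomial (Option ι) ℝ} (hF : ∀ i, (F i).IsHomogeneous d) {ε : ℝ} (hε : 0 < ε) :
    ∃ y : Option ι → ℝ, ∑ o, y o ^ 2 = 1 ∧ ∀ i, |eval y (F i)| ≤ ε := by
  have hdeg (o : Option ι) : (o.elim (-1) F).totalDegree ≤ d := by
    cases o with
    | none => simp
    | some i => exact (hF i).totalDegree_le
  obtain ⟨t, ht, y, hy⟩ := exists_gt_exists_pow_add_mul_eval_eq_zero hd hdeg ε⁻¹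
  have ht0 : 0 < t := (inv_pos.mpr hε).trans ht
  -- The equation with index `none` reads `y none ^ d = t`.
  have hy0 : y ≠ 0 := by
    rintro rfl
    simpa [hd.pos.ne', ht0.ne'] using hy none
  obtain ⟨c, hc⟩ := exists_smul_sum_sq_eq_one hy0
  refine ⟨c • y, hc, fun i ↦ ?_⟩
  have hyi : y (some i) ^ d + t * eval y (F i) = 0 := hy (some i)
  have heq : t * eval (c • y) (F i) = -(c • y) (some i) ^ d := by
    rw [eval_smul_of_isHomogeneous (hF i), Pi.smul_apply, smul_eq_mul, mul_pow]
    linear_combination c ^ d * hyi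
  have hle : t * |eval (c • y) (F i)| ≤ 1 := by
    rw [← abs_of_pos ht0, ← abs_mul, heq, abs_neg, abs_pow]
    exact pow_le_one₀ (abs_nonneg _) (abs_le_one_of_sum_sq_eq_one hc _)
  calc |eval (c • y) (F i)| ≤ t⁻¹ := by rwa [← one_div, le_div_iff₀' ht0]
    _ ≤ ε := inv_le_of_inv_le₀ hε ht.le

lemma exists_sum_sq_eq_one_eval_eq_zero {ι : Type*} [Fintype ι] {d : ℕ} (hd : Odd d)
    {F : ι → MvPolynomial (Option ι) ℝ} (hF : ∀ i, (F i).IsHomogeneous d) :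
    ∃ y : Option ι → ℝ, ∑ o, y o ^ 2 = 1 ∧ ∀ i, eval y (F i) = 0 := by
  obtain ⟨y, hy, hy0⟩ := exists_mem_eq_zero_of_forall_exists_norm_le
    (isCompact_setOfPred_sum_sq_eq_one (Option ι)) (f := fun y i ↦ eval y (F i))
    (continuous_pi fun i ↦ (F i).continuous_eval).continuousOn fun ε hε ↦ by
      obtain ⟨y, hy, hyε⟩ := exists_sum_sq_eq_one_abs_eval_le hd hF hε
      exact ⟨y, hy, (pi_norm_le_iff_of_nonneg hε.le).mpr hyε⟩
  exact ⟨y, hy, congrFun hy0⟩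

lemma eval_sub_eval_neg {σ R : Type*} [CommRing R] (p : MvPolynomial σ R) (y : σ → R) :
    eval y p - eval (-y) p =
      2 * ∑ k ∈ Finset.range (p.totalDegree + 1) with Odd k, eval y (homogeneousComponent k p) := by
  have hneg (k : ℕ) : eval (-y) (homogeneousComponent k p) =
      (-1) ^ k * eval y (homogeneousComponent k p) := by
    rw [← eval_smul_of_isHomogeneous (homogeneousComponent_isHomogeneous k p), neg_one_smul]
  nth_rw 1 2 [← sum_homogeneousComponent p]
  rw [map_sum, map_sum, ← Finset.sum_sub_distrib, Finset.mul_sum, Finset.sum_filter]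
  refine Finset.sum_congr rfl fun k _ ↦ ?_
  rw [hneg]
  split_ifs with hk
  · rw [hk.neg_one_pow]; ring
  · rw [(Nat.not_odd_iff_even.mp hk).neg_one_pow]; ring

lemma exists_isHomogeneous_eval_sub_eval_neg_eq {σ R : Type*} [Fintype σ] [CommRing R] {d : ℕ}
    (hd : Odd d) {p : MvPolynomial σ R} (hp : p.totalDegree ≤ d) :
    ∃ F : MvPolynomial σ R, F.IsHomogeneous d ∧
      ∀ y, ∑ i, y i ^ 2 = 1 → eval y p - eval (-y) p = 2 * eval y F := by
  refine ⟨∑ k ∈ Finset.range (p.totalDegree + 1) with Odd k,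
    homogeneousComponent k p * (∑ i, X i ^ 2) ^ ((d - k) / 2), ?_, fun y hy ↦ ?_⟩
  · refine IsHomogeneous.sum _ _ _ fun k hk ↦ ?_
    rw [Finset.mem_filter, Finset.mem_range] at hk
    have hdk : k + 2 * ((d - k) / 2) = d := by
      have := hk.2
      grind
    have hsq : (∑ i, X i ^ 2 : MvPolynomial σ R).IsHomogeneous 2 :=
      IsHomogeneous.sum _ _ _ fun i _ ↦ isHomogeneous_X_pow i 2
    have := (homogeneousComponent_isHomogeneous k p).mul (hsq.pow ((d - k) / 2))
    rwa [hdk] at this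
  · simp [eval_sub_eval_neg, hy]

lemma exists_sum_sq_eq_one_eval_neg_eq {ι : Type*} [Fintype ι]
    (p : ι → MvPolynomial (Option ι) ℝ) :
    ∃ y : Option ι → ℝ, ∑ o, y o ^ 2 = 1 ∧ ∀ i, eval (-y) (p i) = eval y (p i) := by
  obtain ⟨m, hm⟩ : ∃ m, ∀ i, (p i).totalDegree ≤ m :=
    ⟨_, fun i ↦ Finset.le_sup (f := fun i ↦ (p i).totalDegree) (Finset.mem_univ i)⟩
  have hdeg (i : ι) : (p i).totalDegree ≤ 2 * m + 1 := by linarith [hm i]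
  have hodd : Odd (2 * m + 1) := odd_two_mul_add_one m
  choose F hF hpF using fun i ↦ exists_isHomogeneous_eval_sub_eval_neg_eq hodd (hdeg i)
  obtain ⟨y, hy, hy0⟩ := exists_sum_sq_eq_one_eval_eq_zero hodd hF
  refine ⟨y, hy, fun i ↦ ?_⟩
  linear_combination -2 * hy0 i - hpF i y hy

lemma exists_forall_mem_abs_eval_sub_lt {σ : Type*} {K : Set (σ → ℝ)} (hK : IsCompact K)
    {f : (σ → ℝ) → ℝ} (hf : ContinuousOn f K) {ε : ℝ} (hε : 0 < ε) :
    ∃ p : MvPolynomial σ ℝ, ∀ y ∈ K, |eval y p - f y| < ε := by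
  have : CompactSpace K := isCompact_iff_compactSpace.mp hK
  let coord (i : σ) : C(K, ℝ) := ⟨fun y ↦ y.1 i, (continuous_apply i).comp continuous_subtype_val⟩
  have haeval (p : MvPolynomial σ ℝ) (y : K) : aeval coord p y = eval y.1 p := by
    rw [← coe_aeval_eq_eval]
    exact DFunLike.congr_fun (comp_aeval coord (ContinuousMap.evalAlgHom ℝ ℝ y)) p
  have hsep : (aeval coord : MvPolynomial σ ℝ →ₐ[ℝ] C(K, ℝ)).range.SeparatesPoints := by
    intro x y hxy
    obtain ⟨i, hi⟩ := Function.ne_iff.mp (Subtype.coe_ne_coe.mpr hxy)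
    exact ⟨_, ⟨_, ⟨X i, aeval_X coord i⟩, rfl⟩, hi⟩
  obtain ⟨⟨_, p, rfl⟩, hp⟩ :=
    ContinuousMap.exists_mem_subalgebra_near_continuous_of_separatesPoints _ hsep
      (fun y : K ↦ f y) (continuousOn_iff_continuous_domRestrict.mp hf) ε hε
  refine ⟨p, fun y hy ↦ ?_⟩
  rw [← haeval p ⟨y, hy⟩]
  exact hp ⟨y, hy⟩

lemma exists_sum_sq_eq_one_eq_zero_of_odd {ι : Type*} [Fintype ι] {f : (Option ι → ℝ) → ι → ℝ}
    (hf : ContinuousOn f {y | ∑ o, y o ^ 2 = 1})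
    (hodd : ∀ y, ∑ o, y o ^ 2 = 1 → f (-y) = -f y) :
    ∃ y, ∑ o, y o ^ 2 = 1 ∧ f y = 0 := by
  have hcompact := isCompact_setOfPred_sum_sq_eq_one (Option ι)
  refine exists_mem_eq_zero_of_forall_exists_norm_le hcompact hf fun ε hε ↦ ?_
  choose p hp using fun i ↦
    exists_forall_mem_abs_eval_sub_lt hcompact (continuousOn_pi.mp hf i) hε
  obtain ⟨y, hy, hpy⟩ := exists_sum_sq_eq_one_eval_neg_eq p
  refine ⟨y, hy, (pi_norm_le_iff_of_nonneg hε.le).mpr fun i ↦ ?_⟩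
  have hpos := abs_lt.mp (hp i y hy)
  have hneg := abs_lt.mp (hp i (-y) (by simpa using hy))
  rw [hpy i, hodd y hy, Pi.neg_apply] at hneg
  rw [Real.norm_eq_abs, abs_le]
  constructor <;> linarith

/-- The Borsuk–Ulam theorem, with the sphere replaced by a punctured vector space. -/
theorem exists_ne_zero_eq_zero_of_odd {ι E : Type*} [Fintype ι] [AddCommGroup E] [Module ℝ E]
    [TopologicalSpace E] [IsTopologicalAddGroup E] [ContinuousSMul ℝ E]
    (hE : Fintype.card ι < finrank ℝ E) {f : E → ι → ℝ} (hf : ContinuousOn f {0}ᶜ)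
    (hodd : ∀ x ≠ 0, f (-x) = -f x) : ∃ x ≠ 0, f x = 0 := by
  have : Module.Finite ℝ E := Module.finite_of_finrank_pos (by lia)
  obtain ⟨L, hL⟩ : ∃ L : (Option ι → ℝ) →ₗ[ℝ] E, Function.Injective L :=
    finrank_le_iff_exists_linearMap.mp (by simpa using hE)
  have hL0 {y : Option ι → ℝ} (hy : ∑ o, y o ^ 2 = 1) : L y ≠ 0 := by
    intro h
    rw [(map_eq_zero_iff L hL).mp h] at hy
    simp at hy
  have hcont : Continuous L := L.continuous_of_finiteDimensional
  obtain ⟨y, hy, hfy⟩ := exists_sum_sq_eq_one_eq_zero_of_odd (f := f ∘ L)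
    (hf.comp hcont.continuousOn fun _ ↦ hL0) fun y hy ↦ by
      simpa using hodd (L y) (hL0 hy)
  exact ⟨L y, hL0 hy, hfy⟩

/-! ### Bisecting half-spaces -/

section HalfSpace

variable {E : Type*} [NormedAddCommGroup E] [InnerProductSpace ℝ E]

/-- The closed half-space with normal vector `w.1` and offset `w.2`. The degenerate normal vector
`w.1 = 0` is allowed and gives the empty set or the whole space, so that half-spaces are
parametrised by a linear space in which `-w` stands for the half-space opposite to `w`. -/
def halfSpace (w : E × ℝ) : Set E :=
  {x | ⟪x, w.1⟫ ≤ w.2}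

lemma halfSpace_neg (w : E × ℝ) : halfSpace (-w) = {x | w.2 ≤ ⟪x, w.1⟫} := by
  simp [halfSpace]

variable [MeasurableSpace E]

lemma measurableSet_halfSpace [OpensMeasurableSpace E] (w : E × ℝ) :
    MeasurableSet (halfSpace w) :=
  (isClosed_le (by fun_prop) continuous_const).measurableSet

lemma continuousAt_measureReal_halfSpace [OpensMeasurableSpace E] {μ : Measure E}
    [IsFiniteMeasure μ] {w : E × ℝ} (hw : μ {x | ⟪x, w.1⟫ = w.2} = 0) :
    ContinuousAt (fun w ↦ μ.real (halfSpace w)) w := by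
  have hae : ∀ᵐ x ∂μ, ⟪x, w.1⟫ ≠ w.2 := by simpa [ae_iff] using hw
  refine (ENNReal.tendsto_toReal (measure_ne_top μ _)).comp <|
    tendsto_measure_of_ae_tendsto_indicator_of_isFiniteMeasure _ (measurableSet_halfSpace w)
      measurableSet_halfSpace ?_
  filter_upwards [hae] with x hx
  have hinner : ContinuousAt (fun w : E × ℝ ↦ ⟪x, w.1⟫) w := by fun_prop
  have hoffset : ContinuousAt (fun w : E × ℝ ↦ w.2) w := by fun_prop
  rcases hx.lt_or_gt with h | h
  · filter_upwards [hinner.eventually_lt hoffset h] with z hz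
    exact iff_of_true hz.le h.le
  · filter_upwards [hoffset.eventually_lt hinner h] with z hz
    exact iff_of_false hz.not_ge h.not_ge

lemma measure_eq_zero_of_halfSpace_eq {μ : Measure E} {α : ℝ} (hα : α ≠ 0)
    (h : μ (halfSpace (0, α)) = μ (halfSpace (-(0, α)))) : μ = 0 := by
  rw [halfSpace_neg] at h
  rw [← Measure.measure_univ_eq_zero]
  rcases hα.lt_or_gt with hα | hα <;>
    simpa [halfSpace, hα.le, hα.not_ge, eq_comm] using h

lemma addHaar_setOfPred_inner_eq [BorelSpace E] [FiniteDimensional ℝ E] (μ : Measure E)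
    [μ.IsAddHaarMeasure] {v : E} (hv : v ≠ 0) (α : ℝ) : μ {x | ⟪x, v⟫ = α} = 0 := by
  let H : AffineSubspace ℝ E := (affineSpan ℝ {α}).comap (innerₗ E v).toAffineMap
  have hmem (x : E) : x ∈ H ↔ ⟪x, v⟫ = α := by
    simp [H, real_inner_comm]
  have hH : H ≠ ⊤ := by
    intro htop
    have h0 : ⟪0, v⟫ = α := (hmem 0).mp (htop ▸ AffineSubspace.mem_top ℝ E 0)
    have hvv : ⟪v, v⟫ = α := (hmem v).mp (htop ▸ AffineSubspace.mem_top ℝ E v)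
    rw [← h0, inner_zero_left, inner_self_eq_zero] at hvv
    exact hv hvv
  simp only [← hmem]
  exact Measure.addHaar_affineSubspace μ H hH

end HalfSpace

theorem exists_ne_zero_measure_halfSpace_eq {E ι : Type*} [NormedAddCommGroup E]
    [InnerProductSpace ℝ E] [FiniteDimensional ℝ E] [MeasurableSpace E] [OpensMeasurableSpace E]
    [Fintype ι] (hι : Fintype.card ι ≤ finrank ℝ E) (μ : ι → Measure E)
    [∀ i, IsFiniteMeasure (μ i)] (hμ : ∀ i, ∀ v ≠ 0, ∀ α : ℝ, μ i {x | ⟪x, v⟫ = α} = 0) :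
    ∃ w : E × ℝ, w ≠ 0 ∧ ∀ i, μ i (halfSpace w) = μ i (halfSpace (-w)) := by
  let g (w : E × ℝ) (i : ι) : ℝ := (μ i).real (halfSpace w)
  have hg : ContinuousOn g {0}ᶜ := by
    refine continuousOn_pi.mpr fun i w hw ↦
      (continuousAt_measureReal_halfSpace ?_).continuousWithinAt
    obtain ⟨v, α⟩ := w
    obtain rfl | hv := eq_or_ne v 0
    · have hα : 0 ≠ α := by rintro rfl; exact hw rfl
      simp [hα]
    · exact hμ i v hv α
  have hfinrank : Fintype.card ι < finrank ℝ (E × ℝ) := by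
    rw [finrank_prod, finrank_self]
    lia
  obtain ⟨w, hw, hgw⟩ := exists_ne_zero_eq_zero_of_odd hfinrank (f := fun w ↦ g w - g (-w))
    (hg.sub (hg.comp continuousOn_neg fun _ ↦ neg_ne_zero.mpr)) fun w _ ↦ by simp
  refine ⟨w, hw, fun i ↦ (measureReal_eq_measureReal_iff).mp ?_⟩
  exact sub_eq_zero.mp (congrFun hgw i)

theorem ham_sandwich_general {E ι : Type*} [NormedAddCommGroup E] [InnerProductSpace ℝ E]
    [FiniteDimensional ℝ E] [Nontrivial E] [MeasurableSpace E] [OpensMeasurableSpace E]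
    [Fintype ι] (hι : Fintype.card ι ≤ finrank ℝ E) (μ : ι → Measure E)
    [∀ i, IsFiniteMeasure (μ i)] (hμ : ∀ i, ∀ v ≠ 0, ∀ α : ℝ, μ i {x | ⟪x, v⟫ = α} = 0) :
    ∃ (v : E) (α : ℝ), v ≠ 0 ∧ ∀ i, μ i {x | ⟪x, v⟫ ≤ α} = μ i {x | α ≤ ⟪x, v⟫} := by
  obtain ⟨⟨v, α⟩, hw, h⟩ := exists_ne_zero_measure_halfSpace_eq hι μ hμ
  obtain rfl | hv := eq_or_ne v 0
  · have hα : α ≠ 0 := by rintro rfl; exact hw rfl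
    obtain ⟨v, hv⟩ := exists_ne (0 : E)
    exact ⟨v, 0, hv, fun i ↦ by simp [measure_eq_zero_of_halfSpace_eq hα (h i)]⟩
  · exact ⟨v, α, hv, fun i ↦ (h i).trans (congrArg (μ i) (halfSpace_neg _))⟩

/-- Ham sandwich theorem (continuous version). -/
theorem ham_sandwich (d : ℕ) (hd : 0 < d)
    (μ : Fin d → Measure (EuclideanSpace ℝ (Fin d)))
    (hfin : ∀ i, IsFiniteMeasure (μ i))
    (hac : ∀ i, μ i ≪ volume) :
    ∃ (v : EuclideanSpace ℝ (Fin d)) (α : ℝ), v ≠ 0 ∧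
      ∀ i, μ i {x | ⟪x, v⟫ ≤ α} = μ i {x | α ≤ ⟪x, v⟫} := by
  have : NeZero d := ⟨hd.ne'⟩
  exact ham_sandwich_general (by simp) μ fun i v hv α ↦
    hac i (addHaar_setOfPred_inner_eq volume hv α)
end

section
/- Let d, k, m, a be positive integers with 2^a ≤ m < 2^{a+1} and d ≥ m + (2^{k−1} − 1)·2^a. Then for any m finite measures μ₁, …, μ_m on ℝ^d, each absolutely continuous with respect to the Lebesgue measure, there exist k affine hyperplanes, given by nonzero vectors v₁, …, v_k ∈ ℝ^d and reals α₁, …, α_k, such that for every sign vector ε ∈ {−1, +1}^k and every i = 1, …, m, the region {x ∈ ℝ^d : ε_j(⟨x, v_j⟩ − α_j) ≥ 0 for all j = 1, …, k} has μ_i-measure equal to μ_i(ℝ^d)/2^k. -/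
open MeasureTheory
open scoped RealInnerProductSpace

/-!
In homogeneous coordinates `k` affine hyperplanes are a point of a product of `k` spheres of
dimension `d`. They equipartition `μ` if and only if the sign moments
`∫ ∏ j ∈ S, sign (⟪x, v j⟫ - α j) ∂μ` vanish for all nonempty `S`, by Fourier inversion on
`{±1}^k`. The moment of `S` is continuous, odd in the spheres indexed by `S` and even in the others.

Such functions have a common zero as soon as the product over all of them of the linear forms
`∑ j ∈ S, X j` over `𝔽₂` has a nonzero coefficient at a monomial `X ^ J` with all exponents at most
`d`. Otherwise the signs of the functions define mod 2 cochains whose coboundaries have vanishing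
cup product on sufficiently small simplices. On a fine triangulation of the product of hemispheres
of dimensions `J j`, however, this cup product evaluates to the coefficient of `X ^ J`: each factor
transforms under the antipodal maps according to its linear form, so peeling off one factor lowers
one of the dimensions `J j`.

For `m` measures the product is `D_k ^ m` with `D_k` the product of all nonzero linear forms. As a
polynomial in one variable over the ring in the others, `D_(k+1) = D_k * P` where `P` is monic and
additive, with linear coefficient `D_k` and no other terms of odd degree. With `m = 2 ^ a + r` this
reduces a coefficient of `D_(k+1) ^ m` to one of `D_k ^ (m + r)`.
-/

namespace GruenbaumHadwigerRamos

noncomputable section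

/-! ### Ordered chains modulo two -/

section Chains

variable {X M : Type*} [AddCommGroup M] [Module (ZMod 2) M]

/-- Mod 2 ordered simplicial chains with vertices in `X`. A list of `n + 1` points is an
`n`-simplex, degenerate ones included; the empty list is the generator of the augmentation. -/
abbrev Chain (X : Type*) := List X →₀ ZMod 2

/-- The generator of `Chain X` given by a single ordered simplex. -/
def simplex (l : List X) : Chain X := Finsupp.single l 1

/-- The join of a chain with the vertex `x`, which becomes the first vertex. -/
def cone (x : X) : Chain X →ₗ[ZMod 2] Chain X :=
  Finsupp.lmapDomain (ZMod 2) (ZMod 2) (List.cons x)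

/-- The chain map induced by a map of vertices. -/
def push (g : X → X) : Chain X →ₗ[ZMod 2] Chain X :=
  Finsupp.lmapDomain (ZMod 2) (ZMod 2) (List.map g)

/-- The boundary of an ordered simplex, by recursion on its vertices. -/
def simplexBoundary : List X → Chain X
  | [] => 0
  | x :: l => simplex l + cone x (simplexBoundary l)

/-- The (augmented) boundary operator. -/
def boundary : Chain X →ₗ[ZMod 2] Chain X := Finsupp.linearCombination (ZMod 2) simplexBoundary

/-- The prism over an ordered simplex `l`, triangulating the homotopy from `l` to its image. -/
def simplexPrism (g : X → X) : List X → Chain X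
  | [] => 0
  | x :: l => simplex (x :: g x :: l.map g) + cone x (simplexPrism g l)

/-- The prism operator, a chain homotopy from the identity to `push g`. -/
def prism (g : X → X) : Chain X →ₗ[ZMod 2] Chain X :=
  Finsupp.linearCombination (ZMod 2) (simplexPrism g)

lemma chain_hom_ext {f g : Chain X →ₗ[ZMod 2] M} (h : ∀ l, f (simplex l) = g (simplex l)) :
    f = g :=
  Finsupp.lhom_ext' fun l => LinearMap.ext_ring (h l)

@[simp]
lemma cone_simplex (x : X) (l : List X) : cone x (simplex l) = simplex (x :: l) := by
  simp [cone, simplex]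

@[simp]
lemma push_simplex (g : X → X) (l : List X) : push g (simplex l) = simplex (l.map g) := by
  simp [push, simplex]

@[simp]
lemma boundary_simplex_nil : boundary (simplex ([] : List X)) = 0 := by
  simp [boundary, simplex, simplexBoundary]

lemma boundary_simplex_cons (x : X) (l : List X) :
    boundary (simplex (x :: l)) = simplex l + cone x (boundary (simplex l)) := by
  simp [boundary, simplex, simplexBoundary]

@[simp]
lemma prism_simplex_nil (g : X → X) : prism g (simplex []) = 0 := by
  simp [prism, simplex, simplexPrism]

lemma prism_simplex_cons (g : X → X) (x : X) (l : List X) :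
    prism g (simplex (x :: l)) = simplex (x :: g x :: l.map g) + cone x (prism g (simplex l)) := by
  simp [prism, simplex, simplexPrism]

lemma push_push (g h : X → X) (c : Chain X) : push g (push h c) = push (g ∘ h) c := by
  have : push g ∘ₗ push h = push (g ∘ h) := chain_hom_ext fun l => by simp
  exact LinearMap.congr_fun this c

lemma push_id (c : Chain X) : push id c = c := by
  have : push (id : X → X) = LinearMap.id := chain_hom_ext fun l => by simp
  exact LinearMap.congr_fun this c

lemma push_cone (g : X → X) (x : X) (c : Chain X) : push g (cone x c) = cone (g x) (push g c) := by
  have : push g ∘ₗ cone x = cone (g x) ∘ₗ push g := chain_hom_ext fun l => by simp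
  exact LinearMap.congr_fun this c

lemma boundary_cone (x : X) (c : Chain X) : boundary (cone x c) = c + cone x (boundary c) := by
  have : boundary ∘ₗ cone x = LinearMap.id + cone x ∘ₗ boundary :=
    chain_hom_ext fun l => by simp [boundary_simplex_cons]
  exact LinearMap.congr_fun this c

lemma boundary_boundary (c : Chain X) : boundary (boundary c) = 0 := by
  have : (boundary ∘ₗ boundary : Chain X →ₗ[ZMod 2] Chain X) = 0 := by
    refine chain_hom_ext fun l => ?_
    induction l with
    | nil => simp
    | cons x l ih =>
      simp only [LinearMap.comp_apply, LinearMap.zero_apply] at ih ⊢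
      rw [boundary_simplex_cons, map_add, boundary_cone, ih, map_zero, add_zero,
        ZModModule.add_self]
  exact LinearMap.congr_fun this c

lemma boundary_push (g : X → X) (c : Chain X) : boundary (push g c) = push g (boundary c) := by
  have : boundary ∘ₗ push g = push g ∘ₗ boundary := by
    refine chain_hom_ext fun l => ?_
    induction l with
    | nil => simp
    | cons x l ih =>
      simp only [LinearMap.comp_apply, push_simplex, List.map_cons] at ih ⊢
      rw [boundary_simplex_cons, boundary_simplex_cons, map_add, push_cone, ih, push_simplex]
  exact LinearMap.congr_fun this c

lemma prism_cone (g : X → X) (x : X) (c : Chain X) :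
    prism g (cone x c) = cone x (cone (g x) (push g c)) + cone x (prism g c) := by
  have : prism g ∘ₗ cone x = cone x ∘ₗ cone (g x) ∘ₗ push g + cone x ∘ₗ prism g :=
    chain_hom_ext fun l => by simp [prism_simplex_cons]
  exact LinearMap.congr_fun this c

lemma boundary_prism (g : X → X) (c : Chain X) :
    boundary (prism g c) = push g c + c + prism g (boundary c) := by
  have : boundary ∘ₗ prism g = push g + LinearMap.id + prism g ∘ₗ boundary := by
    refine chain_hom_ext fun l => ?_
    induction l with
    | nil => simp [ZModModule.add_self]
    | cons x l ih =>
      simp only [LinearMap.comp_apply, LinearMap.add_apply, LinearMap.id_apply] at ih ⊢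
      rw [prism_simplex_cons, map_add, boundary_cone, ih, boundary_simplex_cons,
        boundary_simplex_cons, boundary_simplex_cons, (prism g).map_add, prism_cone,
        ← boundary_push]
      simp only [map_add, push_simplex, cone_simplex, List.map_cons]
      have cancel := ZModModule.add_self (simplex (x :: l.map g))
      rw [← sub_eq_zero, ← cancel]
      abel
  exact LinearMap.congr_fun this c

/-- Chains all of whose simplices lie in `s`. -/
abbrev chainsIn (s : Set (List X)) : Submodule (ZMod 2) (Chain X) :=
  Finsupp.supported (ZMod 2) (ZMod 2) s

variable {s t : Set (List X)} {c : Chain X}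

lemma simplex_mem_chainsIn {l : List X} (hl : l ∈ s) : simplex l ∈ chainsIn s :=
  Finsupp.single_mem_supported _ _ hl

lemma chainsIn_eq_span (s : Set (List X)) :
    chainsIn s = Submodule.span (ZMod 2) (simplex '' s) :=
  Finsupp.supported_eq_span_single _ s

lemma map_mem_of_mem_chainsIn {f : Chain X →ₗ[ZMod 2] M} {N : Submodule (ZMod 2) M}
    (h : ∀ l ∈ s, f (simplex l) ∈ N) (hc : c ∈ chainsIn s) : f c ∈ N := by
  rw [chainsIn_eq_span] at hc
  have : Submodule.span (ZMod 2) (simplex '' s) ≤ N.comap f :=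
    Submodule.span_le.2 (Set.forall_mem_image.2 h)
  exact this hc

lemma eq_of_mem_chainsIn {f g : Chain X →ₗ[ZMod 2] M}
    (h : ∀ l ∈ s, f (simplex l) = g (simplex l)) (hc : c ∈ chainsIn s) : f c = g c := by
  rw [chainsIn_eq_span] at hc
  exact LinearMap.eqOn_span (Set.forall_mem_image.2 h) hc

lemma cone_mem_chainsIn {x : X} (h : ∀ l ∈ s, x :: l ∈ t) (hc : c ∈ chainsIn s) :
    cone x c ∈ chainsIn t :=
  map_mem_of_mem_chainsIn
    (fun l hl => by rw [cone_simplex]; exact simplex_mem_chainsIn (h l hl)) hc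

lemma push_mem_chainsIn {g : X → X} (h : ∀ l ∈ s, l.map g ∈ t) (hc : c ∈ chainsIn s) :
    push g c ∈ chainsIn t :=
  map_mem_of_mem_chainsIn
    (fun l hl => by rw [push_simplex]; exact simplex_mem_chainsIn (h l hl)) hc

lemma prism_simplex_mem_chainsIn (g : X → X) (l : List X) :
    prism g (simplex l) ∈ chainsIn {l' | ∀ x ∈ l', ∃ y ∈ l, x = y ∨ x = g y} := by
  induction l with
  | nil => rw [prism_simplex_nil]; exact Submodule.zero_mem _
  | cons a l ih =>
    rw [prism_simplex_cons]
    refine Submodule.add_mem _ (simplex_mem_chainsIn ?_) (cone_mem_chainsIn ?_ ih)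
    · intro x hx
      rcases List.mem_cons.1 hx with rfl | hx
      · exact ⟨x, List.mem_cons_self, Or.inl rfl⟩
      · obtain ⟨y, hy, rfl⟩ := List.mem_map.1 (show x ∈ (a :: l).map g from hx)
        exact ⟨y, hy, Or.inr rfl⟩
    · intro l' hl' x hx
      rcases List.mem_cons.1 hx with rfl | hx
      · exact ⟨x, List.mem_cons_self, Or.inl rfl⟩
      · obtain ⟨y, hy, hxy⟩ := hl' x hx
        exact ⟨y, List.mem_cons_of_mem _ hy, hxy⟩

end Chains

/-! ### Cup products of coboundaries -/

section Cochains

variable {X τ : Type*}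

/-- The pairing of a mod 2 cochain with chains. -/
def pair (φ : List X → ZMod 2) : Chain X →ₗ[ZMod 2] ZMod 2 :=
  Finsupp.linearCombination (ZMod 2) φ

/-- A cochain is a cocycle if it annihilates all boundaries. -/
def IsCocycle (φ : List X → ZMod 2) : Prop := ∀ c, pair φ (boundary c) = 0

/-- The unit of the cup product: the constant `0`-cochain `1`. -/
def unitCochain : List X → ZMod 2
  | [_] => 1
  | _ => 0

/-- The cup product `s ∪ φ` with a `0`-cochain `s`. -/
def cup (s : X → ZMod 2) (φ : List X → ZMod 2) : List X → ZMod 2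
  | [] => 0
  | x :: l => s x * φ (x :: l)

/-- The cup product `δs ∪ φ` with the coboundary of a `0`-cochain `s`. -/
def deltaCup (s : X → ZMod 2) (φ : List X → ZMod 2) : List X → ZMod 2
  | x :: y :: l => (s x + s y) * φ (y :: l)
  | _ => 0

/-- The iterated cup product `δ(s t₁) ∪ ⋯ ∪ δ(s tₙ)` along the list `t₁, …, tₙ`. -/
def deltaCups (s : τ → X → ZMod 2) : List τ → List X → ZMod 2
  | [] => unitCochain
  | t :: T => deltaCup (s t) (deltaCups s T)

@[simp]
lemma pair_simplex (φ : List X → ZMod 2) (l : List X) : pair φ (simplex l) = φ l := by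
  simp [pair, simplex]

lemma pair_cup_cone (s : X → ZMod 2) (φ : List X → ZMod 2) (x : X) (c : Chain X) :
    pair (cup s φ) (cone x c) = s x * pair φ (cone x c) := by
  have : pair (cup s φ) ∘ₗ cone x = s x • (pair φ ∘ₗ cone x) :=
    chain_hom_ext fun l => by simp [cup]
  exact LinearMap.congr_fun this c

lemma IsCocycle.pair_cup_boundary {φ : List X → ZMod 2} (hφ : IsCocycle φ) (s : X → ZMod 2)
    (c : Chain X) : pair (cup s φ) (boundary c) = pair (deltaCup s φ) c := by
  have : pair (cup s φ) ∘ₗ boundary = pair (deltaCup s φ) := by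
    refine chain_hom_ext fun l => ?_
    match l with
    | [] => simp [deltaCup]
    | [x] => simp [deltaCup, cup, boundary_simplex_cons]
    | x :: y :: l =>
      have cocycle := hφ (simplex (x :: y :: l))
      rw [boundary_simplex_cons, map_add, CharTwo.add_eq_zero] at cocycle
      rw [LinearMap.comp_apply, boundary_simplex_cons, map_add, pair_cup_cone, ← cocycle]
      simp only [pair_simplex, cup, deltaCup]
      ring
  exact LinearMap.congr_fun this c

lemma IsCocycle.deltaCup {φ : List X → ZMod 2} (hφ : IsCocycle φ) (s : X → ZMod 2) :
    IsCocycle (deltaCup s φ) := fun c => by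
  rw [← hφ.pair_cup_boundary, boundary_boundary, map_zero]

lemma isCocycle_unitCochain : IsCocycle (unitCochain : List X → ZMod 2) := fun c => by
  have cone_cone (x y : X) :
      pair unitCochain ∘ₗ cone x ∘ₗ cone y = (0 : Chain X →ₗ[ZMod 2] ZMod 2) :=
    chain_hom_ext fun l => by simp [unitCochain]
  have : pair unitCochain ∘ₗ boundary = (0 : Chain X →ₗ[ZMod 2] ZMod 2) := by
    refine chain_hom_ext fun l => ?_
    match l with
    | [] => simp
    | [x] => simp [boundary_simplex_cons, unitCochain]
    | [x, y] => simp [boundary_simplex_cons, unitCochain, CharTwo.add_self_eq_zero]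
    | x :: y :: z :: l =>
      have h := LinearMap.congr_fun (cone_cone x y) (boundary (simplex (z :: l)))
      simp only [LinearMap.comp_apply, LinearMap.zero_apply] at h ⊢
      simp [boundary_simplex_cons y, boundary_simplex_cons x, h, unitCochain]
  exact LinearMap.congr_fun this c

lemma isCocycle_deltaCups (s : τ → X → ZMod 2) (T : List τ) : IsCocycle (deltaCups s T) := by
  induction T with
  | nil => exact isCocycle_unitCochain
  | cons t T ih => exact ih.deltaCup (s t)

@[simp]
lemma deltaCups_nil (s : τ → X → ZMod 2) (T : List τ) : deltaCups s T [] = 0 := by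
  cases T <;> rfl

lemma exists_ne_of_deltaCups_ne_zero {s : τ → X → ZMod 2} {T : List τ} {l : List X}
    (h : deltaCups s T l ≠ 0) : ∀ t ∈ T, ∃ x ∈ l, ∃ y ∈ l, s t x ≠ s t y := by
  induction T generalizing l with
  | nil => simp
  | cons t T ih =>
    match l with
    | [] | [x] => simp [deltaCups, deltaCup] at h
    | x :: y :: l =>
      obtain ⟨hxy, htail⟩ := mul_ne_zero_iff.1 h
      rw [Ne, CharTwo.add_eq_zero] at hxy
      grind

lemma deltaCups_map {s : τ → X → ZMod 2} {T : List τ} {g : X → X} {l : List X}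
    (h : ∀ t ∈ T, ∃ a, ∀ x ∈ l, s t (g x) = s t x + a) :
    deltaCups s T (l.map g) = deltaCups s T l := by
  induction T generalizing l with
  | nil => rcases l with _ | ⟨x, _ | ⟨y, l⟩⟩ <;> simp [deltaCups, unitCochain]
  | cons t T ih =>
    match l with
    | [] | [x] => simp [deltaCups, deltaCup]
    | x :: y :: l =>
      obtain ⟨a, ha⟩ := h t (by simp)
      have tail : deltaCups s T ((y :: l).map g) = deltaCups s T (y :: l) :=
        ih fun t' ht' => (h t' (List.mem_cons_of_mem _ ht')).imp
          fun _ hb z hz => hb z (List.mem_cons_of_mem _ hz)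
      simp only [List.map_cons] at tail
      simp only [List.map_cons, deltaCups, deltaCup, tail, ha x (by simp), ha y (by simp)]
      rw [add_add_add_comm, CharTwo.add_self_eq_zero, add_zero]

end Cochains

/-! ### Filling small cycles -/

section SmallChains

variable {X : Type*} [PseudoMetricSpace X] {D D' : Set X} {g : X → X} {p : X} {η η' ρ : ℝ}
  {c z : Chain X}

/-- Ordered simplices with vertices in `D` and diameter at most `η`. -/
def smallSimplices (D : Set X) (η : ℝ) : Set (List X) :=
  {l | (∀ x ∈ l, x ∈ D) ∧ ∀ x ∈ l, ∀ y ∈ l, dist x y ≤ η}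

/-- Chains in `D` whose simplices have diameter at most `η`. -/
abbrev smallChains (D : Set X) (η : ℝ) : Submodule (ZMod 2) (Chain X) :=
  chainsIn (smallSimplices D η)

lemma smallChains_mono (hD : D ⊆ D') (hη : η ≤ η') : smallChains D η ≤ smallChains D' η' :=
  Finsupp.supported_mono fun _ hl =>
    ⟨fun x hx => hD (hl.1 x hx), fun x hx y hy => (hl.2 x hx y hy).trans hη⟩

lemma push_mem_smallChains (hgD : Set.MapsTo g D D') (hg : LipschitzWith 1 g)
    (hc : c ∈ smallChains D η) : push g c ∈ smallChains D' η := by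
  refine push_mem_chainsIn (fun l hl => ⟨?_, ?_⟩) hc
  · exact List.forall_mem_map.2 fun x hx => hgD (hl.1 x hx)
  · refine List.forall_mem_map.2 fun x hx => List.forall_mem_map.2 fun y hy => ?_
    exact (hg.dist_le_mul x y).trans (by simpa using hl.2 x hx y hy)

lemma cone_mem_smallChains (hp : p ∈ D) (hρ : ∀ x ∈ D', dist x p ≤ ρ) (hD : D' ⊆ D) (hη : 0 ≤ η)
    (hρ0 : 0 ≤ ρ) (hc : c ∈ smallChains D' η) : cone p c ∈ smallChains D (η + ρ) := by
  refine cone_mem_chainsIn (fun l hl => ⟨?_, ?_⟩) hc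
  · exact List.forall_mem_cons.2 ⟨hp, fun x hx => hD (hl.1 x hx)⟩
  · have to_p (x) (hx : x ∈ l) : dist x p ≤ η + ρ := by linarith [hρ x (hl.1 x hx)]
    refine List.forall_mem_cons.2 ⟨List.forall_mem_cons.2 ⟨?_, ?_⟩, fun x hx =>
      List.forall_mem_cons.2 ⟨to_p x hx, fun y hy => ?_⟩⟩
    · rw [dist_self]; positivity
    · exact fun y hy => dist_comm p y ▸ to_p y hy
    · linarith [hl.2 x hx y hy]

lemma prism_mem_smallChains (hgD : Set.MapsTo g D D) (hg : LipschitzWith 1 g)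
    (hρ : ∀ x ∈ D, dist x (g x) ≤ ρ) (hρ0 : 0 ≤ ρ) (hc : c ∈ smallChains D η) :
    prism g c ∈ smallChains D (η + ρ) := by
  refine map_mem_of_mem_chainsIn (fun l hl => ?_) hc
  refine Finsupp.supported_mono (t := smallSimplices D (η + ρ))
    (fun l' hl' => ⟨fun x hx => ?_, fun x hx x' hx' => ?_⟩) (prism_simplex_mem_chainsIn g l)
  · obtain ⟨y, hy, rfl | rfl⟩ := hl' x hx
    exacts [hl.1 _ hy, hgD (hl.1 _ hy)]
  · obtain ⟨y, hy, hxy⟩ := hl' x hx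
    obtain ⟨y', hy', hxy'⟩ := hl' x' hx'
    have hyy' := hl.2 y hy y' hy'
    have hgy := hρ y (hl.1 y hy)
    have hgy' := hρ y' (hl.1 y' hy')
    rcases hxy with rfl | rfl <;> rcases hxy' with rfl | rfl
    · linarith
    · linarith [dist_triangle x y' (g y')]
    · linarith [dist_triangle_left (g y) x' y]
    · have := hg.dist_le_mul y y'
      rw [NNReal.coe_one, one_mul] at this
      linarith

lemma exists_boundary_eq_of_push_iterate (hp : p ∈ D) (hgD : Set.MapsTo g D D)
    (hg : LipschitzWith 1 g) (hρ : ∀ x ∈ D, dist x (g x) ≤ ρ) (hη : 0 ≤ η) (hρ0 : 0 ≤ ρ) (n : ℕ)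
    (hn : ∀ x ∈ D, dist (g^[n] x) p ≤ ρ) (hz : z ∈ smallChains D η) (hz0 : boundary z = 0) :
    ∃ w ∈ smallChains D (η + ρ), boundary w = z := by
  suffices ∀ m, ∃ w ∈ smallChains D (η + ρ), boundary w = z + push g^[m] z by
    obtain ⟨w, hw, hwz⟩ := this n
    have hpush : push g^[n] z ∈ smallChains (D ∩ Metric.closedBall p ρ) η :=
      push_mem_smallChains (fun x hx => ⟨hgD.iterate n hx, hn x hx⟩)
        (by simpa using hg.iterate n) hz
    refine ⟨w + cone p (push g^[n] z), add_mem hw (cone_mem_smallChains hp (fun x hx => hx.2)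
      Set.inter_subset_left hη hρ0 hpush), ?_⟩
    rw [map_add, hwz, boundary_cone, boundary_push, hz0, map_zero, map_zero, add_zero, add_assoc,
      ZModModule.add_self, add_zero]
  intro m
  induction m with
  | zero => exact ⟨0, zero_mem _, by simp [push_id, ZModModule.add_self]⟩
  | succ m ih =>
    obtain ⟨w, hw, hwz⟩ := ih
    have hpush : push g^[m] z ∈ smallChains D η :=
      push_mem_smallChains (hgD.iterate m) (by simpa using hg.iterate m) hz
    refine ⟨w + prism g (push g^[m] z),
      add_mem hw (prism_mem_smallChains hgD hg hρ hρ0 hpush), ?_⟩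
    rw [map_add, hwz, boundary_prism, boundary_push, hz0, map_zero, map_zero, add_zero, push_push,
      ← Function.iterate_succ', add_comm (push _ z), add_add_add_comm, ← add_assoc,
      add_assoc z, ZModModule.add_self, add_zero]

end SmallChains

lemma exists_boundary_eq_of_starConvex {E : Type*} [NormedAddCommGroup E] [NormedSpace ℝ E]
    {D : Set E} {p : E} (hp : p ∈ D) (hstar : StarConvex ℝ p D) (hbdd : Bornology.IsBounded D)
    {η ρ : ℝ} (hη : 0 ≤ η) (hρ : 0 < ρ) {z : Chain E} (hz : z ∈ smallChains D η)
    (hz0 : boundary z = 0) : ∃ w ∈ smallChains D (η + ρ), boundary w = z := by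
  obtain ⟨R, hR⟩ := (Metric.isBounded_iff_subset_closedBall p).1 hbdd
  have hR0 : 0 ≤ R := by simpa using hR hp
  obtain ⟨r, hr0, hr1, hrR⟩ : ∃ r : ℝ, 0 ≤ r ∧ r < 1 ∧ (1 - r) * R ≤ ρ :=
    ⟨R / (R + ρ), by positivity, by rw [div_lt_one (by positivity)]; linarith, by
      rw [one_sub_div (by positivity), add_sub_cancel_left, div_mul_eq_mul_div,
        div_le_iff₀ (by positivity)]
      nlinarith⟩
  let g : E → E := AffineMap.homothety p r
  have hgD : Set.MapsTo g D D := fun x hx => by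
    simpa [g, AffineMap.homothety_apply, add_comm] using hstar.add_smul_sub_mem hx hr0 hr1.le
  have hlip : LipschitzWith 1 g := LipschitzWith.of_dist_le_mul fun x y => by
    simpa [g, AffineMap.homothety_apply, dist_smul₀, abs_of_nonneg hr0] using
      mul_le_of_le_one_left dist_nonneg hr1.le
  have dist_iterate (n : ℕ) (x : E) : dist (g^[n] x) p = r ^ n * dist x p := by
    induction n with
    | zero => simp
    | succ n ih =>
      rw [Function.iterate_succ_apply', dist_homothety_center, dist_comm p, ih, pow_succ',
        mul_assoc, Real.norm_of_nonneg hr0]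
  obtain ⟨n, hn⟩ := exists_pow_lt_of_lt_one (show 0 < ρ / (R + 1) by positivity) hr1
  have hnR : r ^ n * R ≤ ρ := by
    rw [lt_div_iff₀ (by positivity)] at hn
    nlinarith [pow_nonneg hr0 n]
  refine exists_boundary_eq_of_push_iterate hp hgD hlip (fun x hx => ?_) hη hρ.le n
    (fun x hx => ?_) hz hz0
  · rw [dist_self_homothety, Real.norm_of_nonneg (by linarith), dist_comm]
    exact (mul_le_mul_of_nonneg_left (hR hx) (by linarith)).trans hrR
  · rw [dist_iterate]
    exact (mul_le_mul_of_nonneg_left (hR hx) (by positivity)).trans hnR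

/-! ### Antipodal sums in products -/

section NegAt

variable {κ V : Type*} [DecidableEq κ]

/-- Negation of the `i`-th coordinate of a point of a power of `V`. -/
def negAt [Neg V] (i : κ) (x : κ → V) : κ → V := Function.update x i (-x i)

@[simp]
lemma negAt_same [Neg V] (i : κ) (x : κ → V) : negAt i x i = -x i := by simp [negAt]

lemma negAt_of_ne [Neg V] {i j : κ} (h : j ≠ i) (x : κ → V) : negAt i x j = x j := by
  simp [negAt, h]

lemma negAt_comp_negAt [InvolutiveNeg V] (i : κ) : (negAt i ∘ negAt i : (κ → V) → κ → V) = id := by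
  ext x; simp [negAt]

lemma negAt_comp_comm [Neg V] (i j : κ) :
    (negAt i ∘ negAt j : (κ → V) → κ → V) = negAt j ∘ negAt i := by
  ext x u
  rcases eq_or_ne i j with rfl | hij
  · rfl
  · simp [negAt, hij, hij.symm, Function.update_comm hij]

lemma lipschitzWith_negAt [Fintype κ] [SeminormedAddCommGroup V] (i : κ) :
    LipschitzWith 1 (negAt i : (κ → V) → κ → V) := by
  refine LipschitzWith.of_dist_le_mul fun x y => ?_
  rw [NNReal.coe_one, one_mul, dist_pi_le_iff dist_nonneg]
  intro j
  refine le_trans (le_of_eq ?_) (dist_le_pi_dist x y j)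
  rcases eq_or_ne j i with rfl | hj
  · rw [negAt_same, negAt_same, dist_neg_neg]
  · rw [negAt_of_ne hj, negAt_of_ne hj]

/-- The sum of a chain and its image under negation of the `i`-th coordinate. -/
def antipodalSum [Neg V] (i : κ) : Chain (κ → V) →ₗ[ZMod 2] Chain (κ → V) :=
  LinearMap.id + push (negAt i)

lemma antipodalSum_apply [Neg V] (i : κ) (c : Chain (κ → V)) :
    antipodalSum i c = c + push (negAt i) c := rfl

lemma antipodalSum_comm [Neg V] (i j : κ) (c : Chain (κ → V)) :
    antipodalSum i (antipodalSum j c) = antipodalSum j (antipodalSum i c) := by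
  simp only [antipodalSum_apply, map_add, push_push]
  rw [negAt_comp_comm i j]
  abel

lemma antipodalSum_antipodalSum [InvolutiveNeg V] (i : κ) (c : Chain (κ → V)) :
    antipodalSum i (antipodalSum i c) = 0 := by
  simp only [antipodalSum_apply, map_add, push_push, negAt_comp_negAt, push_id]
  rw [add_comm (push _ c), ZModModule.add_self]

lemma boundary_antipodalSum [Neg V] (i : κ) (c : Chain (κ → V)) :
    boundary (antipodalSum i c) = antipodalSum i (boundary c) := by
  simp only [antipodalSum_apply, map_add, boundary_push]

/-- The cellular boundary of the cell indexed by `J`, in the cell structure on a power of a sphere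
whose only cells, up to the antipodal maps, are the chains `h J`: the product formula applied to
`∂ eⱼ = eⱼ₋₁ + (-eⱼ₋₁)` in each factor. -/
def cellBoundary [Fintype κ] [Neg V] (h : (κ →₀ ℕ) → Chain (κ → V)) (J : κ →₀ ℕ) :
    Chain (κ → V) :=
  ∑ i, if Finsupp.single i 1 ≤ J then antipodalSum i (h (J - Finsupp.single i 1)) else 0

lemma sum_sum_eq_zero_of_symm {ι M : Type*} [AddCommGroup M] [Module (ZMod 2) M] (s : Finset ι)
    (f : ι → ι → M) (hsymm : ∀ i u, f i u = f u i) (hdiag : ∀ i, f i i = 0) :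
    ∑ i ∈ s, ∑ u ∈ s, f i u = 0 := by
  rw [← Finset.sum_product']
  refine Finset.sum_involution (fun a _ => a.swap) (fun a _ => ?_) (fun a _ ha hswap => ?_)
    (by simp [and_comm]) (by simp)
  · rw [Prod.fst_swap, Prod.snd_swap, hsymm, ZModModule.add_self]
  · rw [← congrArg Prod.fst hswap] at ha
    exact ha (hdiag a.2)

lemma boundary_cellBoundary [Fintype κ] [InvolutiveNeg V] {h : (κ →₀ ℕ) → Chain (κ → V)}
    {J : κ →₀ ℕ}
    (hJ : ∀ i, Finsupp.single i 1 ≤ J → antipodalSum i (boundary (h (J - Finsupp.single i 1))) =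
      antipodalSum i (cellBoundary h (J - Finsupp.single i 1))) :
    boundary (cellBoundary h J) = 0 := by
  have expand (i : κ) : boundary (if Finsupp.single i 1 ≤ J then
      antipodalSum i (h (J - Finsupp.single i 1)) else 0) =
      ∑ u, if Finsupp.single i 1 + Finsupp.single u 1 ≤ J then antipodalSum i
        (antipodalSum u (h (J - (Finsupp.single i 1 + Finsupp.single u 1)))) else 0 := by
    split_ifs with hi
    · simp only [boundary_antipodalSum, hJ i hi, cellBoundary, map_sum, le_tsub_iff_left hi,
        tsub_tsub]
      exact Finset.sum_congr rfl fun u _ => by rw [apply_ite (antipodalSum i), map_zero]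
    · rw [map_zero, eq_comm]
      exact Finset.sum_eq_zero fun u _ => if_neg fun hiu => hi (le_self_add.trans hiu)
  rw [cellBoundary, map_sum, Finset.sum_congr rfl fun i _ => expand i]
  refine sum_sum_eq_zero_of_symm _ _ (fun i u => ?_) (fun i => ?_)
  · rw [add_comm, antipodalSum_comm]
  · simp only [antipodalSum_antipodalSum, ite_self]

end NegAt

/-! ### Small cells of a product of spheres -/

section Cells

variable {κ : Type*} {N : ℕ}

/-- The unit sphere of `ℝ^N` in the `ℓ¹` norm. With this norm the hemispheres below are star-shaped
around their poles along straight segments. -/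
def l1Sphere (N : ℕ) : Set (Fin N → ℝ) := {x | ∑ l, |x l| = 1}

/-- The closed upper hemisphere of the `j`-dimensional coordinate subsphere of `l1Sphere N`. -/
def hemisphere (N j : ℕ) : Set (Fin N → ℝ) :=
  {x | x ∈ l1Sphere N ∧ ∀ l, (l.val = j → 0 ≤ x l) ∧ (j < l.val → x l = 0)}

/-- The `j`-th standard unit vector of `ℝ^N`; it is zero if `N ≤ j`. -/
def pole (N j : ℕ) : Fin N → ℝ := fun l => if l.val = j then 1 else 0

/-- The product of copies of the sphere `l1Sphere N` indexed by `κ`. -/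
abbrev sphereProduct (κ : Type*) (N : ℕ) : Set (κ → Fin N → ℝ) := Set.univ.pi fun _ => l1Sphere N

/-- The product over `i : κ` of the hemispheres of dimension `J i`. -/
abbrev cell (N : ℕ) (J : κ →₀ ℕ) : Set (κ → Fin N → ℝ) := Set.univ.pi fun i => hemisphere N (J i)

lemma hemisphere_subset_l1Sphere (N j : ℕ) : hemisphere N j ⊆ l1Sphere N := fun _ hx => hx.1

lemma cell_subset_sphereProduct (J : κ →₀ ℕ) : cell N J ⊆ sphereProduct κ N :=
  Set.pi_mono fun i _ => hemisphere_subset_l1Sphere N (J i)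

lemma isCompact_l1Sphere (N : ℕ) : IsCompact (l1Sphere N) := by
  refine Metric.isCompact_of_isClosed_isBounded
    (isClosed_eq (by fun_prop) continuous_const)
    (isBounded_iff_forall_norm_le.2 ⟨1, fun x hx => ?_⟩)
  refine (pi_norm_le_iff_of_nonneg zero_le_one).2 fun l => ?_
  exact (Finset.single_le_sum (fun _ _ => abs_nonneg _) (Finset.mem_univ l)).trans_eq hx

lemma isCompact_sphereProduct (κ : Type*) (N : ℕ) : IsCompact (sphereProduct κ N) :=
  isCompact_univ_pi fun _ => isCompact_l1Sphere N

lemma ne_zero_of_mem_l1Sphere {x : Fin N → ℝ} (hx : x ∈ l1Sphere N) : x ≠ 0 := by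
  rintro rfl
  simp [l1Sphere] at hx

lemma neg_mem_l1Sphere {x : Fin N → ℝ} (hx : x ∈ l1Sphere N) : -x ∈ l1Sphere N := by
  simpa [l1Sphere] using hx

lemma pole_mem_hemisphere {j : ℕ} (hj : j < N) : pole N j ∈ hemisphere N j := by
  refine ⟨?_, fun l => ⟨fun hl => ?_, fun hl => ?_⟩⟩
  · have (l : Fin N) : |pole N j l| = if l = ⟨j, hj⟩ then 1 else 0 := by
      simp [pole, Fin.ext_iff, apply_ite abs]
    simp [l1Sphere, this]
  · simp [pole, hl]
  · simp [pole, hl.ne']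

lemma starConvex_hemisphere {j : ℕ} (hj : j < N) :
    StarConvex ℝ (pole N j) (hemisphere N j) := by
  intro x hx a b ha hb hab
  have hpole := pole_mem_hemisphere hj
  refine ⟨?_, fun l => ⟨fun hl => ?_, fun hl => ?_⟩⟩
  · have same_sign (l : Fin N) : |(a • pole N j + b • x) l| = a * |pole N j l| + b * |x l| := by
      by_cases hl : l.val = j
      · have hp0 := (hpole.2 l).1 hl
        have hx0 := (hx.2 l).1 hl
        rw [abs_of_nonneg hp0, abs_of_nonneg hx0]
        exact abs_of_nonneg (add_nonneg (mul_nonneg ha hp0) (mul_nonneg hb hx0))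
      · simp [pole, hl, abs_mul, abs_of_nonneg hb]
    have hpole_sum : ∑ l, |pole N j l| = 1 := hpole.1
    have hx_sum : ∑ l, |x l| = 1 := hx.1
    change ∑ l, |(a • pole N j + b • x) l| = 1
    simp_rw [same_sign]
    rw [Finset.sum_add_distrib, ← Finset.mul_sum, ← Finset.mul_sum, hpole_sum, hx_sum, mul_one,
      mul_one, hab]
  · exact add_nonneg (mul_nonneg ha ((hpole.2 l).1 hl)) (mul_nonneg hb ((hx.2 l).1 hl))
  · simp [(hpole.2 l).2 hl, (hx.2 l).2 hl]

lemma mem_hemisphere_succ_of_mem {j : ℕ} {x : Fin N → ℝ} (hx : x ∈ hemisphere N j) :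
    x ∈ hemisphere N (j + 1) :=
  ⟨hx.1, fun l => ⟨fun hl => ((hx.2 l).2 (by lia)).ge, fun hl => (hx.2 l).2 (by lia)⟩⟩

lemma neg_mem_hemisphere_succ_of_mem {j : ℕ} {x : Fin N → ℝ} (hx : x ∈ hemisphere N j) :
    -x ∈ hemisphere N (j + 1) :=
  ⟨neg_mem_l1Sphere hx.1, fun l => ⟨fun hl => by simp [(hx.2 l).2 (by lia : j < l.val)],
    fun hl => by simp [(hx.2 l).2 (by lia : j < l.val)]⟩⟩

lemma cell_subset_cell_add_single (J : κ →₀ ℕ) (i : κ) :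
    cell N J ⊆ cell N (J + Finsupp.single i 1) := by
  classical
  refine fun x hx => Set.mem_univ_pi.2 fun j => ?_
  rw [Finsupp.add_apply, Finsupp.single_apply]
  split_ifs
  · exact mem_hemisphere_succ_of_mem (hx j trivial)
  · exact hx j trivial

lemma mapsTo_negAt_cell_add_single [DecidableEq κ] (J : κ →₀ ℕ) (i : κ) :
    Set.MapsTo (negAt i) (cell N J) (cell N (J + Finsupp.single i 1)) := by
  refine fun x hx => Set.mem_univ_pi.2 fun j => ?_
  rcases eq_or_ne j i with rfl | hj
  · rw [negAt_same, Finsupp.add_apply, Finsupp.single_eq_same]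
    exact neg_mem_hemisphere_succ_of_mem (hx j trivial)
  · rw [negAt_of_ne hj, Finsupp.add_apply, Finsupp.single_eq_of_ne hj]
    exact hx j trivial

lemma degree_tsub_single_add_one {J : κ →₀ ℕ} {i : κ} (hi : Finsupp.single i 1 ≤ J) :
    (J - Finsupp.single i 1).degree + 1 = J.degree := by
  conv_rhs => rw [← tsub_add_cancel_of_le hi, map_add, Finsupp.degree_single]

variable [Fintype κ] [DecidableEq κ]

lemma antipodalSum_mem_smallChains {J : κ →₀ ℕ} {i : κ} (hi : Finsupp.single i 1 ≤ J) {η : ℝ}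
    {c : Chain (κ → Fin N → ℝ)} (hc : c ∈ smallChains (cell N (J - Finsupp.single i 1)) η) :
    antipodalSum i c ∈ smallChains (cell N J) η := by
  rw [← tsub_add_cancel_of_le hi]
  exact add_mem (smallChains_mono (cell_subset_cell_add_single _ i) le_rfl hc)
    (push_mem_smallChains (mapsTo_negAt_cell_add_single _ i) (lipschitzWith_negAt i) hc)

/-- A chain of simplices of diameter at most `(|J| + 1) η` triangulating the cell indexed by `J`,
built by filling the cellular boundary, which has already been triangulated. -/
def cellChain (N : ℕ) (η : ℝ) (J : κ →₀ ℕ) : Chain (κ → Fin N → ℝ) :=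
  if J = 0 then simplex [fun _ => pole N 0]
  else Classical.epsilon fun w => w ∈ smallChains (cell N J) ((J.degree + 1) * η) ∧
    boundary w = ∑ i, if hi : Finsupp.single i 1 ≤ J then
      antipodalSum i (cellChain N η (J - Finsupp.single i 1)) else 0
termination_by J.degree
decreasing_by exact (degree_tsub_single_add_one hi).le

lemma cellChain_zero (N : ℕ) (η : ℝ) :
    cellChain N η (0 : κ →₀ ℕ) = simplex [fun _ => pole N 0] := by
  rw [cellChain, if_pos rfl]

lemma cellChain_of_ne_zero (N : ℕ) (η : ℝ) {J : κ →₀ ℕ} (hJ : J ≠ 0) :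
    cellChain N η J = Classical.epsilon fun w =>
      w ∈ smallChains (cell N J) ((J.degree + 1) * η) ∧
        boundary w = cellBoundary (cellChain N η) J := by
  rw [cellChain, if_neg hJ]
  simp only [cellBoundary, dite_eq_ite]

lemma cellBoundary_zero (h : (κ →₀ ℕ) → Chain (κ → Fin N → ℝ)) : cellBoundary h 0 = 0 :=
  Finset.sum_eq_zero fun i _ => if_neg (by simp)

lemma cellChain_mem_and_boundary {η : ℝ} (hη : 0 < η) {J : κ →₀ ℕ} (hJ : ∀ i, J i < N) :
    cellChain N η J ∈ smallChains (cell N J) ((J.degree + 1) * η) ∧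
      (J ≠ 0 → boundary (cellChain N η J) = cellBoundary (cellChain N η) J) := by
  induction hn : J.degree using Nat.strong_induction_on generalizing J with
  | _ n ih
  subst hn
  rcases eq_or_ne J 0 with rfl | hJ0
  · refine ⟨?_, fun h => absurd rfl h⟩
    rw [cellChain_zero]
    refine simplex_mem_chainsIn ⟨?_, ?_⟩
    · exact List.forall_mem_singleton.2 fun i _ => pole_mem_hemisphere (hJ i)
    · simp [hη.le]
  have faces (i : κ) (hi : Finsupp.single i 1 ≤ J) := ih _ (degree_tsub_single_add_one hi).le
    (fun u => (Nat.sub_le _ _).trans_lt (hJ u)) rfl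
  have hmem : cellBoundary (cellChain N η) J ∈ smallChains (cell N J) (J.degree * η) := by
    refine sum_mem fun i _ => ?_
    split_ifs with hi
    · refine antipodalSum_mem_smallChains hi ?_
      rw [← degree_tsub_single_add_one hi, Nat.cast_add_one]
      exact (faces i hi).1
    · exact zero_mem _
  have hcycle : boundary (cellBoundary (cellChain N η) J) = 0 := by
    refine boundary_cellBoundary fun i hi => ?_
    rcases eq_or_ne (J - Finsupp.single i 1) 0 with h0 | h0
    · rw [h0, cellChain_zero, cellBoundary_zero, map_zero, boundary_simplex_cons]
      simp [antipodalSum_apply, ZModModule.add_self]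
    · rw [(faces i hi).2 h0]
  have hfill := exists_boundary_eq_of_starConvex (D := cell N J) (p := fun i => pole N (J i))
    (fun i _ => pole_mem_hemisphere (hJ i)) (starConvex_pi fun i _ => starConvex_hemisphere (hJ i))
    ((isCompact_sphereProduct κ N).isBounded.subset (cell_subset_sphereProduct J))
    (by positivity) hη hmem hcycle
  rw [cellChain_of_ne_zero N η hJ0, add_one_mul]
  exact (Classical.epsilon_spec hfill).imp_right fun h _ => h

end Cells

/-! ### A Borsuk–Ulam theorem for products of spheres -/

section Equivariance

variable {κ : Type*} {N : ℕ} {F : Finset κ} {f : (κ → Fin N → ℝ) → ℝ}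

/-- `0` at positive elements and `1` elsewhere. -/
def signBit {V : Type*} [Zero V] [LinearOrder V] (x : V) : ZMod 2 := if 0 < x then 0 else 1

lemma signBit_neg {V : Type*} [AddCommGroup V] [LinearOrder V] [IsOrderedAddMonoid V] {x : V}
    (hx : x ≠ 0) : signBit (-x) = signBit x + 1 := by
  rcases lt_or_gt_of_ne hx with h | h
  · simp [signBit, h, h.not_gt, CharTwo.add_self_eq_zero]
  · simp [signBit, h, h.not_gt]

/-- The sign of `f`, as a mod 2 `0`-cochain. At the zeros of `f` it is replaced by the sum of the
signs of the coordinates in `F` for the lexicographic order; if `f` is odd in exactly these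
coordinates, this keeps the cochain equivariant. -/
def signCochain (F : Finset κ) (f : (κ → Fin N → ℝ) → ℝ) (x : κ → Fin N → ℝ) : ZMod 2 :=
  if f x = 0 then ∑ i ∈ F, signBit (toLex (x i)) else signBit (f x)

lemma mul_nonpos_of_signCochain_ne {x y : κ → Fin N → ℝ}
    (h : signCochain F f x ≠ signCochain F f y) : f x * f y ≤ 0 := by
  contrapose! h
  rcases pos_and_pos_or_neg_and_neg_of_mul_pos h with ⟨hx, hy⟩ | ⟨hx, hy⟩
  · simp [signCochain, signBit, hx, hy, hx.ne', hy.ne']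
  · simp [signCochain, signBit, hx.not_gt, hy.not_gt, hx.ne, hy.ne]

variable [DecidableEq κ]

/-- `f` is odd in the coordinates of the product of spheres indexed by `F`, even in the others. -/
def HasParity (F : Finset κ) (f : (κ → Fin N → ℝ) → ℝ) : Prop :=
  ∀ x ∈ sphereProduct κ N, ∀ i, f (negAt i x) = if i ∈ F then -f x else f x

/-- The additive mod 2 version of `HasParity`. -/
def HasParityMod2 (F : Finset κ) (s : (κ → Fin N → ℝ) → ZMod 2) : Prop :=
  ∀ x ∈ sphereProduct κ N, ∀ i, s (negAt i x) = s x + if i ∈ F then 1 else 0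

lemma hasParityMod2_sum_signBit (F : Finset κ) :
    HasParityMod2 F fun x : κ → Fin N → ℝ => ∑ i ∈ F, signBit (toLex (x i)) := by
  intro x hx i
  have flip (j : κ) :
      signBit (toLex (negAt i x j)) = signBit (toLex (x j)) + if j = i then 1 else 0 := by
    rcases eq_or_ne j i with rfl | hj
    · rw [negAt_same, if_pos rfl, toLex_neg, signBit_neg]
      exact toLex_eq_zero.not.2 (ne_zero_of_mem_l1Sphere (hx j trivial))
    · rw [negAt_of_ne hj, if_neg hj, add_zero]
  simp_rw [flip, Finset.sum_add_distrib, Finset.sum_ite_eq']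

lemma HasParity.hasParityMod2_signCochain (hf : HasParity F f) :
    HasParityMod2 F (signCochain F f) := by
  intro x hx i
  by_cases h0 : f x = 0
  · simpa [signCochain, hf x hx i, h0] using hasParityMod2_sum_signBit F x hx i
  · by_cases hi : i ∈ F
    · simp [signCochain, hf x hx i, h0, hi, signBit_neg]
    · simp [signCochain, hf x hx i, h0, hi]

end Equivariance

section Evaluation

lemma coeff_sum_X_mul {σ R : Type*} [Fintype σ] [CommSemiring R] [DecidableEq σ] (F : Finset σ)
    (p : MvPolynomial σ R) (J : σ →₀ ℕ) :
    MvPolynomial.coeff J ((∑ i ∈ F, MvPolynomial.X i) * p) =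
      ∑ i, if Finsupp.single i 1 ≤ J then
        (if i ∈ F then 1 else 0) * MvPolynomial.coeff (J - Finsupp.single i 1) p else 0 := by
  rw [Finset.sum_mul, MvPolynomial.coeff_sum, ← Finset.sum_subset (Finset.subset_univ F)]
  · refine Finset.sum_congr rfl fun i hi => ?_
    simp [MvPolynomial.coeff_X_mul', hi, Finsupp.single_le_iff, Nat.one_le_iff_ne_zero]
  · intro i _ hi
    simp [hi]

lemma pair_cup_antipodalSum {κ V : Type*} [DecidableEq κ] [Neg V] {s : (κ → V) → ZMod 2}
    {φ : List (κ → V) → ZMod 2} {i : κ} {a : ZMod 2} {A : Set (List (κ → V))}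
    (hs : ∀ l ∈ A, ∀ x ∈ l, s (negAt i x) = s x + a)
    (hφ : ∀ l ∈ A, φ (l.map (negAt i)) = φ l) (hφ0 : φ [] = 0) {c : Chain (κ → V)}
    (hc : c ∈ chainsIn A) : pair (cup s φ) (antipodalSum i c) = a * pair φ c := by
  refine eq_of_mem_chainsIn (f := pair (cup s φ) ∘ₗ antipodalSum i) (g := a • pair φ)
    (fun l hl => ?_) hc
  rw [LinearMap.comp_apply, antipodalSum_apply, map_add, push_simplex, LinearMap.smul_apply,
    pair_simplex, pair_simplex, pair_simplex, smul_eq_mul]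
  match l with
  | [] => simp [cup, hφ0]
  | x :: l =>
    have hφl := hφ _ hl
    rw [List.map_cons] at hφl ⊢
    simp only [cup, hφl, hs _ hl x List.mem_cons_self]
    linear_combination φ (x :: l) * CharTwo.add_self_eq_zero (s x)

variable {κ τ : Type*} [Fintype κ] [DecidableEq κ] {N : ℕ}

lemma pair_cup_antipodalSum_cellChain {F : τ → Finset κ} {s : τ → (κ → Fin N → ℝ) → ZMod 2}
    (hs : ∀ t, HasParityMod2 (F t) (s t)) (t : τ) (T : List τ) {η : ℝ} (hη : 0 < η) (i : κ)
    {J : κ →₀ ℕ} (hJ : ∀ i, J i < N) :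
    pair (cup (s t) (deltaCups s T)) (antipodalSum i (cellChain N η J)) =
      (if i ∈ F t then 1 else 0) * pair (deltaCups s T) (cellChain N η J) := by
  have vertex_mem {l : List (κ → Fin N → ℝ)} {D : ℝ} (hl : l ∈ smallSimplices (cell N J) D)
      {x : κ → Fin N → ℝ} (hx : x ∈ l) : x ∈ sphereProduct κ N :=
    cell_subset_sphereProduct J (hl.1 x hx)
  exact pair_cup_antipodalSum (fun l hl x hx => hs t x (vertex_mem hl hx) i)
    (fun l hl => deltaCups_map fun u _ => ⟨_, fun x hx => hs u x (vertex_mem hl hx) i⟩)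
    (deltaCups_nil s T) (cellChain_mem_and_boundary hη hJ).1

lemma pair_deltaCups_cellChain {F : τ → Finset κ} {s : τ → (κ → Fin N → ℝ) → ZMod 2}
    (hs : ∀ t, HasParityMod2 (F t) (s t)) {η : ℝ} (hη : 0 < η) (T : List τ) {J : κ →₀ ℕ}
    (hJ : ∀ i, J i < N) (hdeg : J.degree = T.length) :
    pair (deltaCups s T) (cellChain N η J) =
      MvPolynomial.coeff J (T.map fun t => ∑ i ∈ F t, MvPolynomial.X i).prod := by
  induction T generalizing J with
  | nil =>
    obtain rfl := (Finsupp.degree_eq_zero_iff J).1 hdeg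
    simp [cellChain_zero, deltaCups, unitCochain]
  | cons t T ih =>
    have hJ0 : J ≠ 0 := by rintro rfl; simp at hdeg
    rw [List.map_cons, List.prod_cons, coeff_sum_X_mul, deltaCups,
      ← (isCocycle_deltaCups s T).pair_cup_boundary, (cellChain_mem_and_boundary hη hJ).2 hJ0,
      cellBoundary, map_sum]
    refine Finset.sum_congr rfl fun i _ => ?_
    by_cases hi : Finsupp.single i 1 ≤ J
    · have hJi (u : κ) : (J - Finsupp.single i 1 : κ →₀ ℕ) u < N :=
        (Nat.sub_le _ _).trans_lt (hJ u)
      have hdegi : (J - Finsupp.single i 1).degree = T.length := by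
        have := degree_tsub_single_add_one hi
        simp only [List.length_cons] at hdeg
        lia
      rw [if_pos hi, if_pos hi, pair_cup_antipodalSum_cellChain hs t T hη i hJi, ih hJi hdegi]
    · rw [if_neg hi, if_neg hi, map_zero]

end Evaluation

section BorsukUlam

open Filter Topology in
lemma exists_forall_eq_zero_of_forall_near_mul_nonpos {X τ : Type*} [PseudoMetricSpace X]
    {K : Set X} (hK : IsCompact K) {f : τ → X → ℝ} (hf : ∀ t, ContinuousOn (f t) K)
    (hnear : ∀ δ > 0, ∃ x ∈ K, ∀ t, ∃ u ∈ K, ∃ v ∈ K,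
      dist u x ≤ δ ∧ dist v x ≤ δ ∧ f t u * f t v ≤ 0) : ∃ x ∈ K, ∀ t, f t x = 0 := by
  choose x hxK hx using fun n : ℕ => hnear (1 / ((n : ℝ) + 1)) (by positivity)
  obtain ⟨x₀, hx₀, φ, hφ, hlim⟩ := hK.tendsto_subseq hxK
  refine ⟨x₀, hx₀, fun t => ?_⟩
  choose u hu v hv hux hvx huv using fun n => hx n t
  have near_tendsto (w : ℕ → X) (hw : ∀ n, w n ∈ K)
      (hwx : ∀ n, dist (w n) (x n) ≤ 1 / ((n : ℝ) + 1)) :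
      Tendsto (fun n => f t (w (φ n))) atTop (𝓝 (f t x₀)) := by
    have hdist : Tendsto (fun n => dist (w (φ n)) (x (φ n))) atTop (𝓝 0) :=
      squeeze_zero (fun _ => dist_nonneg) (fun n => hwx (φ n))
        (tendsto_one_div_add_atTop_nhds_zero_nat.comp hφ.tendsto_atTop)
    have hw₀ : Tendsto (fun n => w (φ n)) atTop (𝓝 x₀) :=
      (tendsto_iff_of_dist hdist).2 hlim
    exact (hf t x₀ hx₀).tendsto.comp
      (tendsto_nhdsWithin_iff.2 ⟨hw₀, Eventually.of_forall fun n => hw (φ n)⟩)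
  have hsq : f t x₀ * f t x₀ ≤ 0 :=
    le_of_tendsto ((near_tendsto u hu hux).mul (near_tendsto v hv hvx))
      (Eventually.of_forall fun n => huv (φ n))
  exact mul_self_eq_zero.1 (le_antisymm hsq (mul_self_nonneg _))

lemma degree_eq_card_of_coeff_prod_sum_X_ne_zero {κ τ R : Type*} [Fintype τ] [CommSemiring R]
    {F : τ → Finset κ} {J : κ →₀ ℕ}
    (h : MvPolynomial.coeff J (∏ t, ∑ i ∈ F t, (MvPolynomial.X i : MvPolynomial κ R)) ≠ 0) :
    J.degree = Fintype.card τ := by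
  have hom : (∏ t, ∑ i ∈ F t, (MvPolynomial.X i : MvPolynomial κ R)).IsHomogeneous
      (∑ _t : τ, 1) :=
    MvPolynomial.IsHomogeneous.prod _ _ _ fun t _ =>
      MvPolynomial.IsHomogeneous.sum _ _ _ fun i _ => MvPolynomial.isHomogeneous_X R i
  by_contra hne
  exact h (hom.coeff_eq_zero (by simpa using hne))

theorem exists_forall_eq_zero_of_coeff_ne_zero {κ τ : Type*} [Finite κ] [DecidableEq κ] [Fintype τ]
    {N : ℕ} {F : τ → Finset κ} {f : τ → (κ → Fin N → ℝ) → ℝ}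
    (hcont : ∀ t, ContinuousOn (f t) (sphereProduct κ N))
    (hf : ∀ t, HasParity (F t) (f t)) {J : κ →₀ ℕ} (hJ : ∀ i, J i < N)
    (hcoeff : MvPolynomial.coeff J
      (∏ t, ∑ i ∈ F t, (MvPolynomial.X i : MvPolynomial κ (ZMod 2))) ≠ 0) :
    ∃ x ∈ sphereProduct κ N, ∀ t, f t x = 0 := by
  cases nonempty_fintype κ
  refine exists_forall_eq_zero_of_forall_near_mul_nonpos (isCompact_sphereProduct κ N) hcont
    fun δ hδ => ?_
  let s (t : τ) := signCochain (F t) (f t)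
  let T : List τ := Finset.univ.toList
  have hη : 0 < δ / (J.degree + 1) := by positivity
  have hmem := (cellChain_mem_and_boundary hη hJ).1
  rw [mul_div_cancel₀ _ (by positivity)] at hmem
  have hpair : pair (deltaCups s T) (cellChain N (δ / (J.degree + 1)) J) ≠ 0 := by
    rw [pair_deltaCups_cellChain (fun t => (hf t).hasParityMod2_signCochain) hη T hJ
      (by simpa [T] using degree_eq_card_of_coeff_prod_sum_X_ne_zero hcoeff)]
    simpa [T] using hcoeff
  obtain ⟨l, hl, hne⟩ : ∃ l ∈ smallSimplices (cell N J) δ, deltaCups s T l ≠ 0 := by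
    by_contra! hzero
    exact hpair (eq_of_mem_chainsIn (g := 0) (fun l hl => by simp [hzero l hl]) hmem)
  obtain ⟨x, hx⟩ : ∃ x, x ∈ l :=
    List.exists_mem_of_ne_nil l fun h => hne (h ▸ deltaCups_nil s T)
  have mem_sphere {y} (hy : y ∈ l) := cell_subset_sphereProduct J (hl.1 y hy)
  refine ⟨x, mem_sphere hx, fun t => ?_⟩
  obtain ⟨u, hu, v, hv, huv⟩ := exists_ne_of_deltaCups_ne_zero hne t (by simp [T])
  exact ⟨u, mem_sphere hu, v, mem_sphere hv, hl.2 u hu x hx, hl.2 v hv x hx,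
    mul_nonpos_of_signCochain_ne huv⟩

end BorsukUlam

/-! ### A nonvanishing coefficient of a power of the Dickson product -/

section SpanProd

variable {ι κ A B : Type*} [CommSemiring A] [CommSemiring B]

/-- The product of `x + ∑ i ∈ S, t i` over all `S ⊆ U`. Over `𝔽₂`, if the `t i` are linearly
independent, its zeros in `x` are the span of the `t i`. -/
def spanProd (U : Finset ι) (t : ι → A) (x : A) : A :=
  ∏ S ∈ U.powerset, (x + ∑ i ∈ S, t i)

/-- The product of the sums `∑ i ∈ S, t i` over all nonempty `S ⊆ U`. Over `𝔽₂`, if the `t i` are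
linearly independent, this is the top Dickson invariant of their span. -/
def dicksonProd (U : Finset ι) (t : ι → A) : A :=
  ∏ S ∈ U.powerset with S.Nonempty, ∑ i ∈ S, t i

@[simp]
lemma spanProd_empty (t : ι → A) (x : A) : spanProd ∅ t x = x := by
  simp [spanProd]

@[simp]
lemma dicksonProd_empty (t : ι → A) : dicksonProd ∅ t = 1 := by
  simp [dicksonProd, Finset.prod_filter]

lemma spanProd_insert [DecidableEq ι] {U : Finset ι} {a : ι} (ha : a ∉ U) (t : ι → A) (x : A) :
    spanProd (insert a U) t x = spanProd U t x * spanProd U t (x + t a) := by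
  rw [spanProd, Finset.prod_powerset_insert ha, spanProd, spanProd]
  congr 1
  refine Finset.prod_congr rfl fun S hS => ?_
  rw [Finset.sum_insert fun h => ha (Finset.mem_powerset.1 hS h), add_assoc]

lemma dicksonProd_insert [DecidableEq ι] {U : Finset ι} {a : ι} (ha : a ∉ U) (t : ι → A) :
    dicksonProd (insert a U) t = dicksonProd U t * spanProd U t (t a) := by
  rw [dicksonProd, Finset.prod_filter, Finset.prod_powerset_insert ha, ← Finset.prod_filter,
    dicksonProd, spanProd]
  congr 1
  refine Finset.prod_congr rfl fun S hS => ?_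
  rw [if_pos (Finset.insert_nonempty _ _),
    Finset.sum_insert fun h => ha (Finset.mem_powerset.1 hS h)]

lemma map_spanProd (φ : A →+* B) (U : Finset ι) (t : ι → A) (x : A) :
    φ (spanProd U t x) = spanProd U (fun i => φ (t i)) (φ x) := by
  simp [spanProd]

lemma map_dicksonProd (φ : A →+* B) (U : Finset ι) (t : ι → A) :
    φ (dicksonProd U t) = dicksonProd U fun i => φ (t i) := by
  simp [dicksonProd]

lemma spanProd_map (e : κ ↪ ι) (U : Finset κ) (t : ι → A) (x : A) :
    spanProd (U.map e) t x = spanProd U (fun i => t (e i)) x := by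
  classical
  induction U using Finset.induction_on generalizing x with
  | empty => simp
  | insert a U ha ih =>
    rw [Finset.map_insert, spanProd_insert (by simpa using ha), spanProd_insert ha, ih, ih]

lemma dicksonProd_map (e : κ ↪ ι) (U : Finset κ) (t : ι → A) :
    dicksonProd (U.map e) t = dicksonProd U fun i => t (e i) := by
  classical
  induction U using Finset.induction_on with
  | empty => simp
  | insert a U ha ih =>
    rw [Finset.map_insert, dicksonProd_insert (by simpa using ha), dicksonProd_insert ha, ih,
      spanProd_map]

lemma spanProd_add [CharP A 2] (U : Finset ι) (t : ι → A) (x y : A) :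
    spanProd U t (x + y) = spanProd U t x + spanProd U t y := by
  classical
  induction U using Finset.induction_on generalizing x y with
  | empty => simp
  | insert a U ha ih =>
    simp only [spanProd_insert ha, ih]
    generalize spanProd U t x = p, spanProd U t y = q, spanProd U t (t a) = r
    calc (p + q) * (p + q + r) = p * (p + r) + q * (q + r) + 2 * (p * q) := by ring
      _ = p * (p + r) + q * (q + r) := by rw [CharTwo.two_eq_zero, zero_mul, add_zero]

end SpanProd

section Coefficients

open Polynomial

variable {A : Type*} [CommSemiring A]

section CharTwo

variable [CharP A 2]

lemma coeff_sq_two_mul (P : A[X]) (n : ℕ) : (P ^ 2).coeff (2 * n) = P.coeff n ^ 2 := by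
  rw [← map_frobenius_expand 2 P, coeff_map, coeff_expand_mul' two_pos, frobenius_def]

lemma coeff_sq_of_odd (P : A[X]) {n : ℕ} (hn : Odd n) : (P ^ 2).coeff n = 0 := by
  rw [← map_frobenius_expand 2 P, coeff_map, coeff_expand two_pos,
    if_neg hn.not_two_dvd_nat, map_zero]

lemma coeff_mul_sq_two_mul_add_one {P : A[X]} (hP : ∀ n, Odd n → n ≠ 1 → P.coeff n = 0) (Q : A[X])
    (n : ℕ) : (P * Q ^ 2).coeff (2 * n + 1) = P.coeff 1 * Q.coeff n ^ 2 := by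
  rw [coeff_mul, Finset.sum_eq_single (1, 2 * n), coeff_sq_two_mul]
  · rintro ⟨i, j⟩ hij hne
    rw [Finset.HasAntidiagonal.mem_antidiagonal] at hij
    rcases Nat.even_or_odd j with hj | hj
    · have hi : Odd i := by grind
      rw [hP i hi (by rintro rfl; exact hne (by grind)), zero_mul]
    · rw [coeff_sq_of_odd Q hj, mul_zero]
  · intro h
    exact absurd (Finset.HasAntidiagonal.mem_antidiagonal.2 (add_comm _ _)) h

lemma coeff_pow_two_pow_add {P : A[X]} {n : ℕ} (htop : P.coeff (2 ^ n) = 1)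
    (hodd : ∀ n, Odd n → n ≠ 1 → P.coeff n = 0) {a r : ℕ} (hr : r < 2 ^ a) :
    (P ^ (2 ^ a + r)).coeff (2 ^ (a + n) + r) = P.coeff 1 ^ r := by
  induction a generalizing r with
  | zero =>
    obtain rfl : r = 0 := by simpa using hr
    simp [htop]
  | succ a ih =>
    have hpow : 2 ^ (a + 1) = 2 * 2 ^ a := pow_succ' 2 a
    have hpow' : 2 ^ (a + 1 + n) = 2 * 2 ^ (a + n) := by ring
    obtain ⟨s, rfl | rfl⟩ := Nat.even_or_odd' r
    · rw [show 2 ^ (a + 1) + 2 * s = (2 ^ a + s) * 2 by lia,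
        show 2 ^ (a + 1 + n) + 2 * s = 2 * (2 ^ (a + n) + s) by lia,
        pow_mul, coeff_sq_two_mul, ih (by lia), ← pow_mul, mul_comm]
    · rw [show 2 ^ (a + 1) + (2 * s + 1) = (2 ^ a + s) * 2 + 1 by lia,
        show 2 ^ (a + 1 + n) + (2 * s + 1) = 2 * (2 ^ (a + n) + s) + 1 by lia,
        pow_succ', pow_mul, coeff_mul_sq_two_mul_add_one hodd, ih (by lia), ← pow_mul, mul_comm s,
        ← pow_succ']

end CharTwo

variable {ι : Type*} (U : Finset ι) (t : ι → A)

lemma coeff_spanProd_two_pow_card [Nontrivial A] :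
    (spanProd U (fun i => C (t i)) X).coeff (2 ^ U.card) = 1 := by
  have monic_factor (S : Finset ι) : (X + ∑ i ∈ S, C (t i)).Monic := by
    rw [← map_sum]; exact monic_X_add_C _
  have natDegree_factor (S : Finset ι) : (X + ∑ i ∈ S, C (t i)).natDegree = 1 := by
    rw [← map_sum]; exact natDegree_X_add_C _
  have hmonic : (spanProd U (fun i => C (t i)) X).Monic :=
    monic_prod_of_monic _ _ fun S _ => monic_factor S
  have hdeg : (spanProd U (fun i => C (t i)) X).natDegree = 2 ^ U.card := by
    simp [spanProd, natDegree_prod_of_monic _ _ fun S _ => monic_factor S, natDegree_factor]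
  rw [← hdeg]
  exact hmonic

variable [CharP A 2]

lemma spanProd_insert_X [DecidableEq ι] {U : Finset ι} {a : ι} (ha : a ∉ U) :
    spanProd (insert a U) (fun i => C (t i)) X =
      spanProd U (fun i => C (t i)) X ^ 2 +
        spanProd U (fun i => C (t i)) X * C (spanProd U t (t a)) := by
  rw [spanProd_insert ha, spanProd_add, map_spanProd, mul_add, sq]

lemma coeff_one_spanProd : (spanProd U (fun i => C (t i)) X).coeff 1 = dicksonProd U t := by
  classical
  induction U using Finset.induction_on with
  | empty => simp
  | insert a U ha ih =>
    rw [spanProd_insert_X t ha, coeff_add, coeff_sq_of_odd _ odd_one, coeff_mul_C, ih, zero_add,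
      dicksonProd_insert ha]

lemma coeff_spanProd_of_odd {n : ℕ} (hn : Odd n) (hn1 : n ≠ 1) :
    (spanProd U (fun i => C (t i)) X).coeff n = 0 := by
  classical
  induction U using Finset.induction_on with
  | empty => simp [coeff_X, hn1.symm]
  | insert a U ha ih =>
    rw [spanProd_insert_X t ha, coeff_add, coeff_sq_of_odd _ hn, coeff_mul_C, ih, zero_mul,
      add_zero]

end Coefficients

section DicksonPolynomial

open MvPolynomial

/-- The product of all nonzero linear forms in `k` variables over `𝔽₂`. -/
def dicksonPoly (k : ℕ) : MvPolynomial (Fin k) (ZMod 2) :=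
  dicksonProd Finset.univ X

lemma finSuccEquiv_dicksonPoly (k : ℕ) :
    finSuccEquiv (ZMod 2) k (dicksonPoly (k + 1)) =
      Polynomial.C (dicksonPoly k) *
        spanProd Finset.univ (fun i => Polynomial.C (X i)) Polynomial.X := by
  have huniv : (Finset.univ : Finset (Fin (k + 1))) =
      insert 0 (Finset.univ.map (Fin.succEmb k)) := by
    rw [Fin.univ_succ, Finset.cons_eq_insert]; rfl
  calc finSuccEquiv (ZMod 2) k (dicksonPoly (k + 1))
      = dicksonProd Finset.univ fun i => finSuccEquiv (ZMod 2) k (X i) :=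
        map_dicksonProd (finSuccEquiv (ZMod 2) k).toRingEquiv.toRingHom _ _
    _ = _ := by
      rw [huniv, dicksonProd_insert (by simp), dicksonProd_map, spanProd_map, dicksonPoly,
        map_dicksonProd]
      simp [finSuccEquiv_X_zero, finSuccEquiv_X_succ]

lemma coeff_cons_dicksonPoly_pow {k a r : ℕ} (hr : r < 2 ^ a) (J : Fin k →₀ ℕ) :
    coeff (J.cons (2 ^ (a + k) + r)) (dicksonPoly (k + 1) ^ (2 ^ a + r)) =
      coeff J (dicksonPoly k ^ (2 ^ a + 2 * r)) := by
  have htop := coeff_spanProd_two_pow_card Finset.univ (X : Fin k → MvPolynomial (Fin k) (ZMod 2))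
  rw [Finset.card_univ, Fintype.card_fin] at htop
  rw [← finSuccEquiv_coeff_coeff, map_pow, finSuccEquiv_dicksonPoly, mul_pow, ← Polynomial.C_pow,
    Polynomial.coeff_C_mul,
    coeff_pow_two_pow_add htop (fun n hn hn1 => coeff_spanProd_of_odd _ _ hn hn1) hr,
    coeff_one_spanProd, ← dicksonPoly, ← pow_add, add_assoc, ← two_mul]

lemma exists_coeff_dicksonPoly_pow_ne_zero (k : ℕ) {a r : ℕ} (hr : r < 2 ^ a) :
    ∃ J : Fin k →₀ ℕ, (∀ i, 2 * J i ≤ 2 ^ (a + k) + 2 * r) ∧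
      coeff J (dicksonPoly k ^ (2 ^ a + r)) ≠ 0 := by
  induction k generalizing a r with
  | zero => exact ⟨0, fun i => i.elim0, by simp [dicksonPoly]⟩
  | succ k ih =>
    have hpow : 2 ^ (a + (k + 1)) = 2 * 2 ^ (a + k) := by ring
    obtain ⟨J, hJ, hcoeff⟩ : ∃ J : Fin k →₀ ℕ, (∀ i, 2 * J i ≤ 2 ^ (a + (k + 1)) + 2 * r) ∧
        coeff J (dicksonPoly k ^ (2 ^ a + 2 * r)) ≠ 0 := by
      rcases lt_or_ge (2 * r) (2 ^ a) with h | h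
      · obtain ⟨J, hJ, hcoeff⟩ := ih h
        have hle : 2 ^ a ≤ 2 ^ (a + k) := Nat.pow_le_pow_right two_pos (Nat.le_add_right a k)
        exact ⟨J, fun i => by grind, hcoeff⟩
      · have hpow' : 2 ^ (a + 1) = 2 * 2 ^ a := pow_succ' 2 a
        obtain ⟨J, hJ, hcoeff⟩ := ih (a := a + 1) (r := 2 * r - 2 ^ a) (by lia)
        rw [show 2 ^ (a + 1) + (2 * r - 2 ^ a) = 2 ^ a + 2 * r by lia] at hcoeff
        rw [show a + 1 + k = a + (k + 1) by lia] at hJ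
        exact ⟨J, fun i => (hJ i).trans (by lia), hcoeff⟩
    refine ⟨J.cons (2 ^ (a + k) + r), fun i => ?_, ?_⟩
    · cases i using Fin.cases with
      | zero => rw [Finsupp.cons_zero]; lia
      | succ i => rw [Finsupp.cons_succ]; exact hJ i
    · rwa [coeff_cons_dicksonPoly_pow hr]

end DicksonPolynomial

/-! ### Equipartitions and sign moments -/

section SignMoments

variable {Ω κ : Type*}

lemma measurable_real_sign : Measurable Real.sign :=
  Measurable.ite measurableSet_Iio measurable_const
    (Measurable.ite measurableSet_Ioi measurable_const measurable_const)

lemma norm_real_sign_le_one (r : ℝ) : ‖Real.sign r‖ ≤ 1 := by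
  rcases Real.sign_apply_eq r with h | h | h <;> simp [h]

lemma continuousAt_real_sign {r : ℝ} (hr : r ≠ 0) : ContinuousAt Real.sign r := by
  rcases lt_or_gt_of_ne hr with h | h
  · exact continuousAt_const.congr
      ((eventually_lt_nhds h).mono fun s hs => (Real.sign_of_neg hs).symm)
  · exact continuousAt_const.congr
      ((eventually_gt_nhds h).mono fun s hs => (Real.sign_of_pos hs).symm)

lemma norm_prod_real_sign_le_one (S : Finset κ) (b : κ → ℝ) :
    ‖∏ j ∈ S, Real.sign (b j)‖ ≤ 1 := by
  rw [norm_prod]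
  exact Finset.prod_le_one (fun _ _ => norm_nonneg _) fun _ _ => norm_real_sign_le_one _

lemma one_add_mul_real_sign {ε b : ℝ} (hε : ε = 1 ∨ ε = -1) (hb : b ≠ 0) :
    1 + ε * Real.sign b = if 0 ≤ ε * b then 2 else 0 := by
  rcases hε with rfl | rfl <;> rcases lt_or_gt_of_ne hb with h | h <;>
    norm_num [Real.sign_of_neg, Real.sign_of_pos, h, h.le, h.not_ge]

variable [MeasurableSpace Ω] {μ : Measure Ω} {g : κ → Ω → ℝ}

/-- The `μ`-integral of the product of the signs of the functions `g j`, `j ∈ S`. As `S` varies,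
these are the Fourier coefficients on `{±1}^κ` of the distribution of the sign vector of `g`. -/
def signMoment (μ : Measure Ω) (g : κ → Ω → ℝ) (S : Finset κ) : ℝ :=
  ∫ p, ∏ j ∈ S, Real.sign (g j p) ∂μ

@[simp]
lemma signMoment_empty : signMoment μ g ∅ = μ.real Set.univ := by
  simp [signMoment]

lemma measurable_prod_real_sign (hg : ∀ j, Measurable (g j)) (S : Finset κ) :
    Measurable fun p => ∏ j ∈ S, Real.sign (g j p) :=
  Finset.measurable_fun_prod _ fun j _ => measurable_real_sign.comp (hg j)

lemma integrable_prod_real_sign [IsFiniteMeasure μ] (hg : ∀ j, Measurable (g j))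
    (S : Finset κ) : Integrable (fun p => ∏ j ∈ S, Real.sign (g j p)) μ :=
  .of_bound (measurable_prod_real_sign hg S).aestronglyMeasurable 1
    (.of_forall fun _ => norm_prod_real_sign_le_one S _)

-- Fourier inversion on `{±1}^κ`: the indicator of the region is `2 ^ (-|κ|) ∏ j, (1 + ε j * sign)`.
lemma two_pow_card_mul_measureReal_region [Fintype κ] [IsFiniteMeasure μ]
    (hg : ∀ j, Measurable (g j)) (hg0 : ∀ j, ∀ᵐ p ∂μ, g j p ≠ 0) {ε : κ → ℝ}
    (hε : ∀ j, ε j = 1 ∨ ε j = -1) :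
    2 ^ Fintype.card κ * μ.real {p | ∀ j, 0 ≤ ε j * g j p} =
      ∑ S : Finset κ, (∏ j ∈ S, ε j) * signMoment μ g S := by
  have hmeas : MeasurableSet {p | ∀ j, 0 ≤ ε j * g j p} :=
    .congr (.iInter fun j => measurableSet_le measurable_const ((hg j).const_mul (ε j)))
      (Set.ofPred_forall _).symm
  have expand (p : Ω) : ∏ j, (1 + ε j * Real.sign (g j p)) =
      ∑ S : Finset κ, (∏ j ∈ S, ε j) * ∏ j ∈ S, Real.sign (g j p) := by
    simp only [Finset.prod_one_add, Finset.powerset_univ, Finset.prod_mul_distrib]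
  have indicator_eq : ({p | ∀ j, 0 ≤ ε j * g j p}.indicator fun _ => (2 : ℝ) ^ Fintype.card κ)
      =ᵐ[μ] fun p => ∏ j, (1 + ε j * Real.sign (g j p)) := by
    filter_upwards [ae_all_iff.2 hg0] with p hp
    simp [Set.indicator_apply, one_add_mul_real_sign (hε _) (hp _), Finset.prod_ite_zero]
  calc 2 ^ Fintype.card κ * μ.real {p | ∀ j, 0 ≤ ε j * g j p}
      = ∫ p, {p | ∀ j, 0 ≤ ε j * g j p}.indicator (fun _ => (2 : ℝ) ^ Fintype.card κ) p ∂μ := by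
        rw [integral_indicator_const _ hmeas, smul_eq_mul, mul_comm]
    _ = ∫ p, ∑ S : Finset κ, (∏ j ∈ S, ε j) * ∏ j ∈ S, Real.sign (g j p) ∂μ := by
        rw [integral_congr_ae indicator_eq]; simp only [expand]
    _ = ∑ S : Finset κ, (∏ j ∈ S, ε j) * signMoment μ g S := by
        rw [integral_finsetSum _ fun S _ => (integrable_prod_real_sign hg S).const_mul _]
        simp only [integral_const_mul, signMoment]

/-- The sign patterns of the functions `g j` cut `μ` into `2 ^ k` parts of equal measure. -/
def IsEquipartition {k : ℕ} (μ : Measure Ω) (g : Fin k → Ω → ℝ) : Prop :=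
  ∀ ε : Fin k → ℝ, (∀ j, ε j = 1 ∨ ε j = -1) →
    μ {p | ∀ j, 0 ≤ ε j * g j p} = μ Set.univ / 2 ^ k

lemma isEquipartition_of_signMoment_eq_zero {k : ℕ} {g : Fin k → Ω → ℝ} [IsFiniteMeasure μ]
    (hg : ∀ j, Measurable (g j)) (hg0 : ∀ j, ∀ᵐ p ∂μ, g j p ≠ 0)
    (hmoment : ∀ S : Finset (Fin k), S.Nonempty → signMoment μ g S = 0) :
    IsEquipartition μ g := by
  intro ε hε
  have hsum := two_pow_card_mul_measureReal_region hg hg0 hε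
  rw [Finset.sum_eq_single_of_mem ∅ (Finset.mem_univ _) fun S _ hS => by
    rw [hmoment S (Finset.nonempty_iff_ne_empty.2 hS), mul_zero], Finset.prod_empty, one_mul,
    signMoment_empty, Fintype.card_fin, mul_comm] at hsum
  rw [← ENNReal.toReal_eq_toReal_iff' (measure_ne_top _ _)
    (ENNReal.div_ne_top (measure_ne_top _ _) (by positivity)), ENNReal.toReal_div]
  simpa [Measure.real] using eq_div_of_mul_eq (by positivity) hsum

end SignMoments

section LinearForms

open Matrix

variable {Ω κ : Type*} [MeasurableSpace Ω] {N : ℕ} {φ : Ω → Fin N → ℝ}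

lemma measurable_dotProduct_comp (hφ : Measurable φ) (y : Fin N → ℝ) :
    Measurable fun p => y ⬝ᵥ φ p :=
  (continuous_const.dotProduct continuous_id).measurable.comp hφ

lemma hasParity_signMoment [DecidableEq κ] (μ : Measure Ω) (φ : Ω → Fin N → ℝ) (S : Finset κ) :
    HasParity S fun x => signMoment μ (fun j p => x j ⬝ᵥ φ p) S := by
  intro x _ i
  have sign_negAt (p : Ω) (j : κ) : Real.sign (negAt i x j ⬝ᵥ φ p) =
      (if j = i then -1 else 1) * Real.sign (x j ⬝ᵥ φ p) := by
    rcases eq_or_ne j i with rfl | hj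
    · simp [negAt_same, Real.sign_neg]
    · rw [negAt_of_ne hj, if_neg hj, one_mul]
  simp only [signMoment, sign_negAt, Finset.prod_mul_distrib, Finset.prod_ite_eq']
  split_ifs <;> simp [integral_neg]

lemma continuousOn_signMoment [Finite κ] {μ : Measure Ω} [IsFiniteMeasure μ] (hφ : Measurable φ)
    (hφ0 : ∀ y : Fin N → ℝ, y ≠ 0 → ∀ᵐ p ∂μ, y ⬝ᵥ φ p ≠ 0) (S : Finset κ) :
    ContinuousOn (fun x => signMoment μ (fun j p => x j ⬝ᵥ φ p) S) (sphereProduct κ N) := by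
  intro x hx
  refine continuousWithinAt_of_dominated (bound := fun _ => 1)
    (.of_forall fun y => (measurable_prod_real_sign
      (fun j => measurable_dotProduct_comp hφ (y j)) S).aestronglyMeasurable)
    (.of_forall fun y => .of_forall fun p => norm_prod_real_sign_le_one S _)
    (integrable_const _) ?_
  filter_upwards [ae_all_iff.2 fun j => hφ0 (x j) (ne_zero_of_mem_l1Sphere (hx j trivial))]
    with p hp
  have hcont (j : κ) : ContinuousAt (fun y : κ → Fin N → ℝ => y j ⬝ᵥ φ p) x :=
    ((continuous_apply j).dotProduct continuous_const).continuousAt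
  exact ContinuousAt.continuousWithinAt <| tendsto_finsetProd S fun j _ =>
    (continuousAt_real_sign (hp j)).comp_of_eq (hcont j) rfl

lemma prod_sum_X_nonempty (ι : Type*) [Fintype ι] (k : ℕ) :
    ∏ t : ι × {S : Finset (Fin k) // S.Nonempty},
        ∑ i ∈ t.2.1, (MvPolynomial.X i : MvPolynomial (Fin k) (ZMod 2)) =
      dicksonPoly k ^ Fintype.card ι := by
  have hdickson : dicksonPoly k =
      ∏ S : {S : Finset (Fin k) // S.Nonempty}, ∑ i ∈ S.1, MvPolynomial.X i := by
    rw [dicksonPoly, dicksonProd, Finset.powerset_univ]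
    exact Finset.prod_subtype _ (by simp) _
  simp only [Fintype.prod_prod_type, hdickson, Finset.prod_const, Finset.card_univ]

theorem exists_isEquipartition_dotProduct {ι : Type*} [Fintype ι] {a k : ℕ}
    (hlow : 2 ^ a ≤ Fintype.card ι) (hup : Fintype.card ι < 2 ^ (a + 1))
    (hN : Fintype.card ι + (2 ^ (k - 1) - 1) * 2 ^ a < N) (hφ : Measurable φ)
    {μ : ι → Measure Ω} (hfin : ∀ i, IsFiniteMeasure (μ i))
    (hφ0 : ∀ i, ∀ y : Fin N → ℝ, y ≠ 0 → ∀ᵐ p ∂μ i, y ⬝ᵥ φ p ≠ 0) :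
    ∃ y : Fin k → Fin N → ℝ, (∀ j, y j ≠ 0) ∧
      ∀ i, IsEquipartition (μ i) fun j p => y j ⬝ᵥ φ p := by
  obtain ⟨r, hr⟩ := Nat.exists_eq_add_of_le hlow
  obtain ⟨J, hJ, hcoeff⟩ := exists_coeff_dicksonPoly_pow_ne_zero k (a := a) (r := r) (by lia)
  have hJN (j : Fin k) : J j < N := by
    obtain ⟨k, rfl⟩ := Nat.exists_eq_add_one.2 j.pos
    have hJj := hJ j
    have hpow : 2 ^ (a + (k + 1)) = 2 * (2 ^ k * 2 ^ a) := by ring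
    have hle : 2 ^ a ≤ 2 ^ k * 2 ^ a := Nat.le_mul_of_pos_left _ (by positivity)
    rw [Nat.add_sub_cancel, Nat.sub_mul, one_mul] at hN
    lia
  rw [← hr, ← prod_sum_X_nonempty] at hcoeff
  obtain ⟨y, hy, hzero⟩ := exists_forall_eq_zero_of_coeff_ne_zero
    (fun t => continuousOn_signMoment hφ (hφ0 t.1) t.2.1)
    (fun t => hasParity_signMoment (μ t.1) φ t.2.1) hJN hcoeff
  have hy0 (j : Fin k) : y j ≠ 0 := ne_zero_of_mem_l1Sphere (hy j trivial)
  exact ⟨y, hy0, fun i => isEquipartition_of_signMoment_eq_zero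
    (fun j => measurable_dotProduct_comp hφ (y j)) (fun j => hφ0 i _ (hy0 j))
    fun S hS => hzero (i, ⟨S, hS⟩)⟩

end LinearForms

/-! ### Affine hyperplanes -/

section Hyperplanes

open Matrix

variable {E : Type*} [NormedAddCommGroup E] [InnerProductSpace ℝ E]

lemma addHaar_setOf_inner_eq [FiniteDimensional ℝ E] [MeasurableSpace E] [BorelSpace E]
    (μ : Measure E) [μ.IsAddHaarMeasure] {v : E} (hv : v ≠ 0) (α : ℝ) :
    μ {x | ⟪x, v⟫ = α} = 0 := by
  rcases Set.eq_empty_or_nonempty {x | ⟪x, v⟫ = α} with h | ⟨p, hp⟩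
  · rw [h, measure_empty]
  · have hne_top : AffineSubspace.mk' p (ℝ ∙ v)ᗮ ≠ ⊤ := by
      intro htop
      have hmem : p + v ∈ AffineSubspace.mk' p (ℝ ∙ v)ᗮ := htop ▸ AffineSubspace.mem_top ℝ E _
      rw [AffineSubspace.mem_mk', vsub_eq_sub, add_sub_cancel_left,
        Submodule.mem_orthogonal_singleton_iff_inner_right] at hmem
      exact hv (inner_self_eq_zero.1 hmem)
    refine measure_mono_null (fun x hx => ?_) (Measure.addHaar_affineSubspace μ _ hne_top)
    rw [SetLike.mem_coe, AffineSubspace.mem_mk', vsub_eq_sub,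
      Submodule.mem_orthogonal_singleton_iff_inner_left, inner_sub_left, hx, hp, sub_self]

section Coordinates

variable {n : ℕ} (b : OrthonormalBasis (Fin n) ℝ E)

/-- The coordinates of `p` in an orthonormal basis, followed by `-1`: affine functions of `p` are
the linear functions of this vector. -/
def homogeneousCoords (p : E) : Fin (n + 1) → ℝ :=
  Fin.snoc (b.repr p) (-1)

/-- The vector with coordinates the first `n` entries of `y`. -/
def normalVector (y : Fin (n + 1) → ℝ) : E :=
  b.repr.symm (WithLp.toLp 2 (Fin.init y))

lemma dotProduct_homogeneousCoords (y : Fin (n + 1) → ℝ) (p : E) :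
    y ⬝ᵥ homogeneousCoords b p = ⟪p, normalVector b y⟫ - y (Fin.last n) := by
  have hinner : ⟪p, normalVector b y⟫ = ∑ l, y l.castSucc * b.repr p l := by
    rw [← b.repr.inner_map_map, normalVector, LinearIsometryEquiv.apply_symm_apply,
      PiLp.inner_apply]
    rfl
  simp [hinner, dotProduct, homogeneousCoords, Fin.sum_univ_castSucc, sub_eq_add_neg]

lemma last_ne_zero_of_normalVector_eq_zero {y : Fin (n + 1) → ℝ} (hy : y ≠ 0)
    (hv : normalVector b y = 0) : y (Fin.last n) ≠ 0 := by
  contrapose! hy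
  rw [normalVector, map_eq_zero_iff _ b.repr.symm.injective, WithLp.toLp_eq_zero] at hv
  rw [← Fin.snoc_init_self y, hv, hy]
  ext l
  cases l using Fin.lastCases <;> simp

lemma measurable_homogeneousCoords [MeasurableSpace E] [OpensMeasurableSpace E] :
    Measurable (homogeneousCoords b) := by
  refine Continuous.measurable (continuous_pi fun l => ?_)
  cases l using Fin.lastCases with
  | last => simpa [homogeneousCoords] using continuous_const
  | cast l => simpa [homogeneousCoords] using by fun_prop

lemma ae_dotProduct_homogeneousCoords_ne_zero [MeasurableSpace E] {μ : Measure E}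
    (hnull : ∀ (v : E) (α : ℝ), v ≠ 0 → μ {x | ⟪x, v⟫ = α} = 0) {y : Fin (n + 1) → ℝ}
    (hy : y ≠ 0) : ∀ᵐ p ∂μ, y ⬝ᵥ homogeneousCoords b p ≠ 0 := by
  simp only [dotProduct_homogeneousCoords, sub_ne_zero]
  by_cases hv : normalVector b y = 0
  · simp [hv, (last_ne_zero_of_normalVector_eq_zero b hy hv).symm]
  · exact measure_eq_zero_iff_ae_notMem.1 (hnull _ _ hv)

end Coordinates

lemma measure_univ_eq_zero_of_isEquipartition_const {Ω : Type*} [MeasurableSpace Ω] {μ : Measure Ω}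
    {k : ℕ} {g : Fin k → Ω → ℝ} (h : IsEquipartition μ g) {j : Fin k} {c : ℝ} (hc : c ≠ 0)
    (hg : ∀ p, g j p = c) : μ Set.univ = 0 := by
  obtain ⟨s, hs, hsc⟩ : ∃ s : ℝ, (s = 1 ∨ s = -1) ∧ s * c < 0 := by
    rcases lt_or_gt_of_ne hc with hc | hc
    · exact ⟨1, .inl rfl, by simpa using hc⟩
    · exact ⟨-1, .inr rfl, by simpa using hc⟩
  have hempty : {p | ∀ i, 0 ≤ s * g i p} = ∅ :=
    Set.eq_empty_of_forall_notMem fun p hp => (hg p ▸ hp j).not_gt hsc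
  have hregion := h (fun _ => s) fun _ => hs
  rw [hempty, measure_empty, eq_comm, ENNReal.div_eq_zero_iff] at hregion
  exact hregion.resolve_right (by simp)

lemma exists_ne_zero_isEquipartition_inner [Nontrivial E] [MeasurableSpace E] {ι : Type*}
    {μ : ι → Measure E} {k : ℕ} {v : Fin k → E} {α : Fin k → ℝ} (hα : ∀ j, v j = 0 → α j ≠ 0)
    (h : ∀ i, IsEquipartition (μ i) fun j x => ⟪x, v j⟫ - α j) :
    ∃ (w : Fin k → E) (β : Fin k → ℝ), (∀ j, w j ≠ 0) ∧
      ∀ i, IsEquipartition (μ i) fun j x => ⟪x, w j⟫ - β j := by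
  by_cases hv : ∀ j, v j ≠ 0
  · exact ⟨v, α, hv, h⟩
  push Not at hv
  obtain ⟨j, hj⟩ := hv
  have hzero (i : ι) : μ i = 0 := Measure.measure_univ_eq_zero.1 <|
    measure_univ_eq_zero_of_isEquipartition_const (h i) (j := j) (neg_ne_zero.2 (hα j hj))
      fun x => by simp [hj]
  obtain ⟨w, hw⟩ := exists_ne (0 : E)
  exact ⟨fun _ => w, 0, fun _ => hw, fun i ε _ => by simp [hzero i]⟩

end Hyperplanes

end

end GruenbaumHadwigerRamos

open GruenbaumHadwigerRamos in
theorem gruenbaum_hadwiger_ramos_general {E ι : Type*} [NormedAddCommGroup E]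
    [InnerProductSpace ℝ E] [FiniteDimensional ℝ E] [MeasurableSpace E] [BorelSpace E] [Fintype ι]
    {k a : ℕ} (hlow : 2 ^ a ≤ Fintype.card ι) (hup : Fintype.card ι < 2 ^ (a + 1))
    (hdim : Fintype.card ι + (2 ^ (k - 1) - 1) * 2 ^ a ≤ Module.finrank ℝ E)
    {μ : ι → Measure E} (hfin : ∀ i, IsFiniteMeasure (μ i))
    (hnull : ∀ i (v : E) (α : ℝ), v ≠ 0 → μ i {x | ⟪x, v⟫ = α} = 0) :
    ∃ (v : Fin k → E) (α : Fin k → ℝ),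
      (∀ j, v j ≠ 0) ∧
      ∀ (ε : Fin k → ℝ), (∀ j, ε j = 1 ∨ ε j = -1) →
        ∀ i, μ i {x | ∀ j, 0 ≤ ε j * (⟪x, v j⟫ - α j)} = μ i Set.univ / 2 ^ k := by
  have hpos : 0 < Module.finrank ℝ E :=
    (Nat.two_pow_pos a).trans_le (hlow.trans ((Nat.le_add_right _ _).trans hdim))
  have : Nontrivial E := Module.nontrivial_of_finrank_pos hpos
  let b := stdOrthonormalBasis ℝ E
  obtain ⟨y, hy, hpart⟩ := exists_isEquipartition_dotProduct hlow hup (Nat.lt_succ_of_le hdim)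
    (measurable_homogeneousCoords b) hfin
    fun i _ hy => ae_dotProduct_homogeneousCoords_ne_zero b (hnull i) hy
  simp only [dotProduct_homogeneousCoords] at hpart
  obtain ⟨v, α, hv, hpart⟩ := exists_ne_zero_isEquipartition_inner
    (fun j => last_ne_zero_of_normalVector_eq_zero b (hy j)) hpart
  exact ⟨v, α, hv, fun ε hε i => hpart i ε hε⟩

/-- The Mani-Levitska–Vrećica–Živaljević bound for the
Grünbaum–Hadwiger–Ramos problem. -/
theorem gruenbaum_hadwiger_ramos (d k m a : ℕ)
    (hd : 0 < d) (hk : 0 < k) (hm : 0 < m) (ha : 0 < a)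
    (hma : 2 ^ a ≤ m) (hma' : m < 2 ^ (a + 1))
    (hdm : m + (2 ^ (k - 1) - 1) * 2 ^ a ≤ d)
    (μ : Fin m → Measure (EuclideanSpace ℝ (Fin d)))
    (hfin : ∀ i, IsFiniteMeasure (μ i))
    (hac : ∀ i, μ i ≪ volume) :
    ∃ (v : Fin k → EuclideanSpace ℝ (Fin d)) (α : Fin k → ℝ),
      (∀ j, v j ≠ 0) ∧
      ∀ (ε : Fin k → ℝ), (∀ j, ε j = 1 ∨ ε j = -1) →
        ∀ i, μ i {x | ∀ j, 0 ≤ ε j * (⟪x, v j⟫ - α j)}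
          = μ i Set.univ / 2 ^ k :=
  gruenbaum_hadwiger_ramos_general (by rwa [Fintype.card_fin]) (by rwa [Fintype.card_fin])
    (by rwa [Fintype.card_fin, finrank_euclideanSpace_fin]) hfin fun i _ α hv =>
      hac i (GruenbaumHadwigerRamos.addHaar_setOf_inner_eq volume hv α)
end
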